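/- arXiv:1512.01758 — 7 statements merged into one kernel-verified Lean document; each statement's English description precedes it below -/
import Mathlib

section
/- Let V : Ω × ℝ^{dT} → ℝ ∪ {−∞} be a normal integrand market model satisfying the no-arbitrage condition NA. Then the set 𝒞 = { h ∈ L^0(𝓕;ℝ) : ∃ϑ ∈ 𝒜 with V(·,ϑ(·)) ≥ h a.s. } of superhedgeable claims is closed with respect to convergence in probability. -/
open MeasureTheory Filter Topology
open scoped ENNReal

noncomputable section

/-- A strategy `ϑ` is adapted to the filtration `ℱ`. -/
def AdaptedStrat {Ω : Type*} {T d : ℕ} (ℱ : Fin T → MeasurableSpace Ω)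
    (ϑ : Ω → Fin T → Fin d → ℝ) : Prop :=
  ∀ t : Fin T, Measurable[ℱ t] fun ω => ϑ ω t

/-- The hypographical correspondence of `V` is closed valued and measurable. -/
def HypoClosedMeas {Ω : Type*} {mΩ : MeasurableSpace Ω} {T d : ℕ}
    (V : Ω → (Fin T → Fin d → ℝ) → EReal) : Prop :=
  (∀ ω, IsClosed {xb : (Fin T → Fin d → ℝ) × ℝ | (xb.2 : EReal) ≤ V ω xb.1}) ∧
  (∀ (c : (Fin T → Fin d → ℝ) × ℝ) (s : ℝ),
    MeasurableSet {ω | (Metric.ball c s ∩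
      {xb : (Fin T → Fin d → ℝ) × ℝ | (xb.2 : EReal) ≤ V ω xb.1}).Nonempty})

/-- The recession market model
`V^∞(ω,z) = lim_{λ→∞} sup { (1/δ)·V(ω,δx) : δ > λ, |x−z| < 1/λ }`; since the inner
supremum is antitone in `λ`, the limit equals the infimum over `λ > 0`. -/
def recessionModel {Ω : Type*} {T d : ℕ} (V : Ω → (Fin T → Fin d → ℝ) → EReal)
    (ω : Ω) (z : Fin T → Fin d → ℝ) : EReal :=
  ⨅ l : {l : ℝ // 0 < l}, ⨆ δ : {δ : ℝ // l.1 < δ},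
    ⨆ x : {x : Fin T → Fin d → ℝ // ‖x - z‖ < 1 / l.1},
      (((δ.1)⁻¹ : ℝ) : EReal) * V ω (δ.1 • x.1)

/-- The no-arbitrage condition NA: the only adapted strategy `ϑ` with
`V^∞(·,ϑ(·)) ≥ 0` a.s. is `ϑ = 0`. -/
def NAcond {Ω : Type*} {mΩ : MeasurableSpace Ω} {T d : ℕ} (P : Measure Ω)
    (ℱ : Fin T → MeasurableSpace Ω) (V : Ω → (Fin T → Fin d → ℝ) → EReal) : Prop :=
  ∀ ϑ, AdaptedStrat ℱ ϑ → (∀ᵐ ω ∂P, 0 ≤ recessionModel V ω (ϑ ω)) →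
    ∀ᵐ ω ∂P, ϑ ω = 0

/-!
A sequence of adapted strategies need not have an adapted subsequential limit, but its pointwise
cluster points can be selected adaptedly: fix the coordinates one at a time in chronological order,
each as the `limsup` along those indices for which the earlier coordinates are already close to
their chosen values. By upper semicontinuity such a cluster point superhedges the limit claim as
soon as the sequence is a.s. bounded.

Boundedness follows from NA. Suppose the strategies are `O(c)` for the scale `c` of the positions
taken before and at time `t`, while those taken before `t` have scale `o(c)` along some indices.
Divided by `c`, the strategies have along these indices an adapted cluster point that vanishes
before `t`, has norm one at `t`, and is a recession direction of `V`. NA forbids this, so they are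
`O` of the scale before `t`; descending to `t = 0`, where the scale is constant, bounds them.
-/

section RandomFilter

variable {Ω κ : Type*}

/-- A random filter `F` on the index set `κ` is measurable with respect to the `σ`-algebra `m` if it
has a countable basis of random sets `B n` whose events `{k ∈ B n}` belong to `m`. It records along
which random set of indices a sequence of random variables is followed. -/
def MeasurableFilter (m : MeasurableSpace Ω) (F : Ω → Filter κ) : Prop :=
  ∃ B : ℕ → Ω → Set κ, (∀ n k, MeasurableSet[m] {ω | k ∈ B n ω}) ∧
    ∀ ω, (F ω).HasBasis (fun _ => True) fun n => B n ω

namespace MeasurableFilter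

variable {m m' : MeasurableSpace Ω} {F G : Ω → Filter κ}

theorem mono (hF : MeasurableFilter m F) (hm : m ≤ m') : MeasurableFilter m' F := by
  obtain ⟨B, hBm, hB⟩ := hF
  exact ⟨B, fun n k => hm _ (hBm n k), hB⟩

theorem comap {X : Type*} [MeasurableSpace X] (l : Filter X) [l.IsCountablyGenerated]
    [l.IsMeasurablyGenerated] {u : κ → Ω → X} (hu : ∀ k, Measurable[m] (u k)) :
    MeasurableFilter m fun ω => Filter.comap (fun k => u k ω) l := by
  obtain ⟨b, hb⟩ := l.exists_antitone_basis
  choose s hsl hsm hsb using fun n => IsMeasurablyGenerated.exists_measurable_subset (hb.mem n)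
  have hs : l.HasBasis (fun _ => True) s := hb.toHasBasis.to_hasBasis
    (fun n _ => ⟨n, trivial, hsb n⟩) fun n _ => hb.toHasBasis.mem_iff.1 (hsl n)
  exact ⟨fun n ω => (fun k => u k ω) ⁻¹' s n, fun n k => hu k (hsm n), fun ω => hs.comap _⟩

theorem const (l : Filter κ) [l.IsCountablyGenerated] : MeasurableFilter m fun _ => l := by
  obtain ⟨b, hb⟩ := l.exists_antitone_basis
  exact ⟨fun n _ => b n, fun n k => MeasurableSet.const _, fun _ => hb.toHasBasis⟩

theorem inf (hF : MeasurableFilter m F) (hG : MeasurableFilter m G) :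
    MeasurableFilter m fun ω => F ω ⊓ G ω := by
  obtain ⟨B, hBm, hB⟩ := hF
  obtain ⟨C, hCm, hC⟩ := hG
  refine ⟨fun n ω => B n.unpair.1 ω ∩ C n.unpair.2 ω, fun n k => (hBm _ k).inter (hCm _ k),
    fun ω => ?_⟩
  simpa [Function.comp_def] using ((hB ω).inf (hC ω)).comp_surjective Nat.surjective_unpair

theorem inf_comap_nhds (hF : MeasurableFilter m F) {u : κ → Ω → ℝ} {x : Ω → ℝ}
    (hu : ∀ k, Measurable[m] (u k)) (hx : Measurable[m] x) :
    MeasurableFilter m fun ω => F ω ⊓ Filter.comap (fun k => u k ω) (𝓝 (x ω)) := by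
  have hdist : MeasurableFilter m fun ω => Filter.comap (fun k => dist (u k ω) (x ω)) (𝓝 0) :=
    comap _ fun k => (hu k).dist hx
  have hnhds : ∀ ω, Filter.comap (fun k => u k ω) (𝓝 (x ω)) =
      Filter.comap (fun k => dist (u k ω) (x ω)) (𝓝 0) := fun ω => by
    rw [← nhds_comap_dist, comap_comap]
    rfl
  simpa only [hnhds] using hF.inf hdist

theorem measurable_limsup [Countable κ] (hF : MeasurableFilter m F) {u : κ → Ω → EReal}
    (hu : ∀ k, Measurable[m] (u k)) : Measurable[m] fun ω => limsup (fun k => u k ω) (F ω) := by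
  classical
  obtain ⟨B, hBm, hB⟩ := hF
  simp only [(hB _).limsup_eq_iInf_iSup, iInf_true, iSup_eq_if]
  exact .iInf fun n => .iSup fun k => .ite (hBm n k) (hu k) measurable_const

/-- The `limsup` is taken in `EReal`, where it is measurable without any boundedness. Along `⊥` it
equals `⊥`, whose junk value under `EReal.toReal` is `0`; hence the second clause. -/
theorem exists_measurable_mapClusterPt [Countable κ] (hF : MeasurableFilter m F)
    {u : κ → Ω → ℝ} (hu : ∀ k, Measurable[m] (u k)) :
    ∃ x : Ω → ℝ, Measurable[m] x ∧ (∀ ω, F ω = ⊥ → x ω = 0) ∧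
      ∀ ω, (F ω).NeBot → IsBoundedUnder (· ≤ ·) (F ω) (fun k => |u k ω|) →
        MapClusterPt (x ω) (F ω) fun k => u k ω := by
  let L : Ω → EReal := fun ω => limsup (fun k => (u k ω : EReal)) (F ω)
  have hL : Measurable[m] L := hF.measurable_limsup fun k => (hu k).coe_real_ereal
  refine ⟨fun ω => (L ω).toReal, hL.ereal_toReal, fun ω hω => by simp [L, hω], ?_⟩
  rintro ω hω ⟨M, hM⟩
  have hcluster : MapClusterPt (L ω) (F ω) fun k => (u k ω : EReal) := MapClusterPt.limsup
  obtain ⟨hlow, hupp⟩ : L ω ∈ Set.Icc ((-M : ℝ) : EReal) (M : EReal) := by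
    refine isClosed_Icc.mem_of_mapClusterPt hcluster ?_
    filter_upwards [eventually_map.1 hM] with k hk
    exact ⟨EReal.coe_le_coe_iff.2 (abs_le.1 hk).1, EReal.coe_le_coe_iff.2 (abs_le.1 hk).2⟩
  exact hcluster.tendsto_comp <| EReal.tendsto_toReal
    (ne_top_of_le_ne_top (EReal.coe_ne_top M) hupp) (ne_bot_of_le_ne_bot (EReal.coe_ne_bot _) hlow)

end MeasurableFilter

theorem exists_adapted_neBot_inf_comap_nhds {ι : Type*} [LinearOrder ι] [Countable κ]
    {𝒢 : ι → MeasurableSpace Ω} (h𝒢 : Monotone 𝒢) (s : Finset ι) {F : Ω → Filter κ}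
    (hF : ∀ i ∈ s, MeasurableFilter (𝒢 i) F) {u : ι → κ → Ω → ℝ}
    (hu : ∀ i ∈ s, ∀ k, Measurable[𝒢 i] (u i k)) :
    ∃ x : ι → Ω → ℝ, (∀ i ∈ s, Measurable[𝒢 i] (x i)) ∧ (∀ ω, F ω = ⊥ → ∀ i ∈ s, x i ω = 0) ∧
      ∀ ω, (F ω).NeBot → (∀ i ∈ s, IsBoundedUnder (· ≤ ·) (F ω) fun k => |u i k ω|) →
        (F ω ⊓ ⨅ i ∈ s, comap (fun k => u i k ω) (𝓝 (x i ω))).NeBot := by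
  induction s using Finset.induction_on_min generalizing F with
  | empty => exact ⟨0, by simp, by simp, fun ω hω _ => by simpa using hω⟩
  | insert a s ha ih =>
    simp only [Finset.forall_mem_insert] at hF hu ⊢
    obtain ⟨y, hym, hybot, hy⟩ := hF.1.exists_measurable_mapClusterPt hu.1
    let F' : Ω → Filter κ := fun ω => F ω ⊓ comap (fun k => u a k ω) (𝓝 (y ω))
    have hF' : ∀ i ∈ s, MeasurableFilter (𝒢 i) F' := fun i hi =>
      (hF.1.inf_comap_nhds hu.1 hym).mono (h𝒢 (ha i hi).le)
    obtain ⟨x, hxm, hxbot, hx⟩ := ih hF' hu.2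
    have hupdate : ∀ i ∈ s, Function.update x a y i = x i := fun i hi =>
      Function.update_of_ne (ha i hi).ne' y x
    refine ⟨Function.update x a y, ⟨by simpa using hym, fun i hi => ?_⟩, fun ω hω => ⟨?_, ?_⟩, ?_⟩
    · rw [hupdate i hi]
      exact hxm i hi
    · simpa using hybot ω hω
    · intro i hi
      rw [hupdate i hi]
      exact hxbot ω (by simp [F', hω]) i hi
    · rintro ω hω ⟨hbdd_a, hbdd_s⟩
      have hF'ne : (F' ω).NeBot := by
        rw [neBot_inf_comap_iff_map, inf_comm]
        exact hy ω hω hbdd_a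
      have hne := hx ω hF'ne fun i hi => (hbdd_s i hi).mono inf_le_left
      have hiInf : ⨅ i ∈ s, comap (fun k => u i k ω) (𝓝 (Function.update x a y i ω)) =
          ⨅ i ∈ s, comap (fun k => u i k ω) (𝓝 (x i ω)) :=
        biInf_congr fun i hi => by rw [hupdate i hi]
      rwa [Finset.iInf_insert, Function.update_self, hiInf, ← inf_assoc]

theorem mapClusterPt_pi_iff {ι : Type*} {A : ι → Type*} [∀ i, TopologicalSpace (A i)]
    {l : Filter κ} {u : κ → ∀ i, A i} {x : ∀ i, A i} :
    MapClusterPt x l u ↔ (l ⊓ ⨅ i, comap (fun k => u k i) (𝓝 (x i))).NeBot := by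
  rw [MapClusterPt, ClusterPt, inf_comm, ← neBot_inf_comap_iff_map, nhds_pi, Filter.pi, comap_iInf]
  simp only [comap_comap, Function.comp_def]

end RandomFilter

section Selection

variable {Ω κ : Type*} [Countable κ] {T d : ℕ} {ℱ : Fin T → MeasurableSpace Ω}

theorem exists_adaptedStrat_mapClusterPt (hℱ : Monotone ℱ) (t : ℕ) {F : Ω → Filter κ}
    (hF : ∀ i : Fin T, t ≤ i → MeasurableFilter (ℱ i) F) {u : κ → Ω → Fin T → Fin d → ℝ}
    (hu : ∀ k, ∀ i : Fin T, t ≤ i → Measurable[ℱ i] fun ω => u k ω i) :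
    ∃ x : Ω → Fin T → Fin d → ℝ, AdaptedStrat ℱ x ∧ (∀ ω, F ω = ⊥ → x ω = 0) ∧
      ∀ ω, (F ω).NeBot → IsBoundedUnder (· ≤ ·) (F ω) (fun k => ‖u k ω‖) →
        (∀ i : Fin T, i < t → Tendsto (fun k => u k ω i) (F ω) (𝓝 0)) →
        MapClusterPt (x ω) (F ω) fun k => u k ω := by
  let time : Fin T ×ₗ Fin d → Fin T := fun p => (ofLex p).1
  have htime : Monotone fun p => ℱ (time p) := hℱ.comp Prod.Lex.monotone_fst
  let s : Finset (Fin T ×ₗ Fin d) := {p | t ≤ time p}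
  have hs : ∀ {p}, p ∈ s ↔ t ≤ time p := by simp [s]
  obtain ⟨x, hxm, hxbot, hx⟩ := exists_adapted_neBot_inf_comap_nhds htime s
    (u := fun p k ω => u k ω (ofLex p).1 (ofLex p).2)
    (fun p hp => hF _ (hs.1 hp)) fun p hp k => (measurable_pi_apply _).comp (hu k _ (hs.1 hp))
  refine ⟨fun ω i j => if t ≤ i then x (toLex (i, j)) ω else 0, fun i => ?_, fun ω hω => ?_,
    fun ω hω hbdd hearly => ?_⟩
  · refine @measurable_pi_lambda _ _ _ (ℱ i) _ _ fun j => ?_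
    by_cases hi : t ≤ i
    · simpa only [hi, if_true] using! hxm (toLex (i, j)) (hs.2 hi)
    · simp only [hi, if_false, measurable_const]
  · ext i j
    by_cases hi : t ≤ i
    · simpa [hi] using hxbot ω hω (toLex (i, j)) (hs.2 hi)
    · simp [hi]
  · have hcoord : ∀ p ∈ s, IsBoundedUnder (· ≤ ·) (F ω) fun k => |u k ω (ofLex p).1 (ofLex p).2| :=
      fun p _ => hbdd.mono_le <| .of_forall fun k =>
        (norm_le_pi_norm (u k ω (ofLex p).1) _).trans (norm_le_pi_norm (u k ω) _)
    refine mapClusterPt_pi_iff.2 ((hx ω hω hcoord).mono (le_inf inf_le_left (le_iInf fun i => ?_)))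
    by_cases hi : t ≤ i
    · simp only [hi, if_true, nhds_pi, Filter.pi, comap_iInf, comap_comap, Function.comp_def]
      exact inf_le_of_right_le <| le_iInf fun j => iInf₂_le (toLex (i, j)) (hs.2 hi)
    · simp only [hi, if_false]
      exact inf_le_of_left_le (tendsto_iff_comap.1 (hearly i (not_le.1 hi)))

end Selection

section RunningScale

variable {T : ℕ} {E : Type*} [SeminormedAddCommGroup E]

/-- The scale of the positions that a path `x` takes before time `t`. The summand `1` makes it
possible to divide by it. -/
def runningScale (t : ℕ) (x : Fin T → E) : ℝ :=
  1 + ∑ i : Fin T with i.val < t, ‖x i‖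

/-- The factor by which the position taken at time `t` increases the running scale. -/
def scaleGrowth (t : ℕ) (x : Fin T → E) : ℝ :=
  runningScale (t + 1) x / runningScale t x

theorem one_le_runningScale (t : ℕ) (x : Fin T → E) : 1 ≤ runningScale t x :=
  le_add_of_nonneg_right (by positivity)

theorem runningScale_pos (t : ℕ) (x : Fin T → E) : 0 < runningScale t x :=
  zero_lt_one.trans_le (one_le_runningScale t x)

theorem runningScale_zero (x : Fin T → E) : runningScale 0 x = 1 := by
  simp [runningScale]

theorem runningScale_succ (τ : Fin T) (x : Fin T → E) :
    runningScale (τ + 1) x = runningScale τ x + ‖x τ‖ := by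
  have hinsert : ({i : Fin T | (i : ℕ) < τ + 1} : Finset (Fin T)) =
      insert τ ({i : Fin T | (i : ℕ) < τ} : Finset (Fin T)) := by
    ext i
    simp only [Finset.mem_filter_univ, Finset.mem_insert, Fin.ext_iff]
    lia
  rw [runningScale, runningScale, hinsert, Finset.sum_insert (by simp)]
  ring

theorem norm_apply_le_runningScale {t : ℕ} (x : Fin T → E) {i : Fin T} (hi : i < t) :
    ‖x i‖ ≤ runningScale t x :=
  (Finset.single_le_sum (f := fun i => ‖x i‖) (fun _ _ => norm_nonneg _) (by simpa using hi)).trans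
    (le_add_of_nonneg_left zero_le_one)

theorem norm_le_runningScale (x : Fin T → E) : ‖x‖ ≤ runningScale T x :=
  (pi_norm_le_iff_of_nonneg (runningScale_pos T x).le).2 fun i =>
    norm_apply_le_runningScale x i.isLt

theorem scaleGrowth_le_runningScale (t : ℕ) (x : Fin T → E) :
    scaleGrowth t x ≤ runningScale (t + 1) x :=
  div_le_self (runningScale_pos _ x).le (one_le_runningScale t x)

variable [NormedSpace ℝ E] {κ : Type*} {l : Filter κ} {y : κ → Fin T → E}

theorem norm_inv_runningScale_smul (t : ℕ) (x : Fin T → E) (v : E) :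
    ‖(runningScale t x)⁻¹ • v‖ = ‖v‖ / runningScale t x := by
  rw [norm_smul, norm_inv, Real.norm_of_nonneg (runningScale_pos t x).le, inv_mul_eq_div]

theorem tendsto_inv_runningScale_smul_apply_zero {t : ℕ}
    (hy : Tendsto (fun k => scaleGrowth t (y k)) l atTop) {i : Fin T} (hi : i < t) :
    Tendsto (fun k => (runningScale (t + 1) (y k))⁻¹ • y k i) l (𝓝 0) := by
  refine squeeze_zero_norm (fun k => ?_) hy.inv_tendsto_atTop
  rw [norm_inv_runningScale_smul, Pi.inv_apply, scaleGrowth, inv_div]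
  have := runningScale_pos (t + 1) (y k)
  gcongr
  exact norm_apply_le_runningScale (y k) hi

theorem tendsto_norm_inv_runningScale_smul_apply_one {τ : Fin T}
    (hy : Tendsto (fun k => scaleGrowth τ (y k)) l atTop) :
    Tendsto (fun k => ‖(runningScale (τ + 1) (y k))⁻¹ • y k τ‖) l (𝓝 1) := by
  have hlim := hy.inv_tendsto_atTop.const_sub 1
  rw [sub_zero] at hlim
  refine hlim.congr fun k => ?_
  rw [norm_inv_runningScale_smul, Pi.inv_apply, scaleGrowth, inv_div,
    one_sub_div (runningScale_pos _ (y k)).ne', runningScale_succ, add_sub_cancel_left]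

end RunningScale

theorem bddAbove_range_of_comap_atTop_eq_bot {κ β : Type*} [LinearOrder β] [Nonempty β]
    {u : κ → β} (hu : comap u atTop = ⊥) : BddAbove (Set.range u) := by
  obtain ⟨b, hb⟩ := mem_atTop_sets.1 (comap_eq_bot_iff_compl_range.1 hu)
  exact ⟨b, fun _ hx => le_of_not_ge fun hbx => hb _ hbx hx⟩

theorem isBigO_runningScale_succ {T : ℕ} {E κ : Type*} [SeminormedAddCommGroup E]
    {y : κ → Fin T → E} {t : ℕ} (hy : BddAbove (Set.range fun k => scaleGrowth t (y k))) :
    (fun k => runningScale (t + 1) (y k)) =O[⊤] fun k => runningScale t (y k) := by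
  obtain ⟨C, hC⟩ := hy
  refine Asymptotics.isBigO_top.2 ⟨C, fun k => ?_⟩
  rw [Real.norm_of_nonneg (runningScale_pos _ _).le, Real.norm_of_nonneg (runningScale_pos _ _).le]
  exact (div_le_iff₀ (runningScale_pos t (y k))).1 (hC (Set.mem_range_self k))

section Recession

variable {Ω κ : Type*} {T d : ℕ} {V : Ω → (Fin T → Fin d → ℝ) → EReal} {ω : Ω}

theorem recessionModel_nonneg_of_mapClusterPt {l : Filter κ} {δ : κ → ℝ}
    {y : κ → Fin T → Fin d → ℝ} {z : Fin T → Fin d → ℝ} {H : ℝ} (hδ : Tendsto δ l atTop)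
    (hy : ∀ k, (H : EReal) ≤ V ω (y k)) (hz : MapClusterPt z l fun k => (δ k)⁻¹ • y k) :
    0 ≤ recessionModel V ω z := by
  refine le_iInf fun ⟨r, hr⟩ => EReal.ge_of_forall_gt_iff_ge.1 fun a ha => ?_
  have hHδ : ∀ᶠ k in l, a < (δ k)⁻¹ * H :=
    (by simpa using hδ.inv_tendsto_atTop.mul_const H : Tendsto (fun k => (δ k)⁻¹ * H) l (𝓝 0))
      |>.eventually_const_lt (by exact_mod_cast ha)
  have hnear : ∀ᶠ x in 𝓝 z, ‖x - z‖ < 1 / r := by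
    simpa only [dist_eq_norm] using! Metric.ball_mem_nhds z (one_div_pos.2 hr)
  obtain ⟨k, hkz, hka, hkr⟩ :=
    ((hz.frequently hnear).and_eventually (hHδ.and (hδ.eventually_gt_atTop r))).exists
  have hδk : 0 < δ k := hr.trans hkr
  calc (a : EReal) ≤ ((δ k)⁻¹ : ℝ) * (H : EReal) := by exact_mod_cast hka.le
    _ ≤ ((δ k)⁻¹ : ℝ) * V ω (y k) :=
      mul_le_mul_of_nonneg_left (hy k) (EReal.coe_nonneg.2 (inv_nonneg.2 hδk.le))
    _ = ((δ k)⁻¹ : ℝ) * V ω (δ k • (δ k)⁻¹ • y k) := by rw [smul_inv_smul₀ hδk.ne']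
    _ ≤ ⨆ x : {x : Fin T → Fin d → ℝ // ‖x - z‖ < 1 / r}, ((δ k)⁻¹ : ℝ) * V ω (δ k • x.1) :=
      le_iSup_of_le ⟨(δ k)⁻¹ • y k, hkz⟩ le_rfl
    _ ≤ _ := le_iSup_of_le (⟨δ k, hkr⟩ : {δ : ℝ // r < δ}) le_rfl

theorem recessionModel_zero_nonneg (hV : V ω 0 = 0) : 0 ≤ recessionModel V ω 0 := by
  refine recessionModel_nonneg_of_mapClusterPt (y := fun _ => 0) (H := 0) tendsto_id
    (fun _ => by simp [hV]) ?_
  simpa using (tendsto_const_nhds (f := atTop)).mapClusterPt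

end Recession

theorem le_of_upperSemicontinuousAt_of_mapClusterPt {X β κ : Type*} [TopologicalSpace X]
    [LinearOrder β] [DenselyOrdered β] [TopologicalSpace β] [OrderClosedTopology β] {f : X → β}
    {x : X} {l : Filter κ} {u : κ → X} {g : κ → β} {b : β} (hf : UpperSemicontinuousAt f x)
    (hu : MapClusterPt x l u) (hg : Tendsto g l (𝓝 b)) (hle : ∀ k, g k ≤ f (u k)) : b ≤ f x :=
  le_of_forall_gt_imp_ge_of_dense fun c hc =>
    le_of_tendsto_of_frequently hg <|
      (hu.frequently (hf c hc)).mono fun k hk => (hle k).trans hk.le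

section NoArbitrage

variable {Ω : Type*} {T d : ℕ} {ℱ : Fin T → MeasurableSpace Ω}

theorem AdaptedStrat.measurable_runningScale {ϑ : Ω → Fin T → Fin d → ℝ}
    (hϑ : AdaptedStrat ℱ ϑ) (hℱ : Monotone ℱ) {t : ℕ} {i : Fin T} (hi : t ≤ i + 1) :
    Measurable[ℱ i] fun ω => runningScale t (ϑ ω) := by
  let := ℱ i
  refine (Finset.measurable_fun_sum _ fun j hj => ?_).const_add 1
  have hji : j ≤ i := by
    rw [Finset.mem_filter_univ] at hj
    lia
  exact ((hϑ j).mono (hℱ hji) le_rfl).norm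

theorem AdaptedStrat.measurable_scaleGrowth {ϑ : Ω → Fin T → Fin d → ℝ}
    (hϑ : AdaptedStrat ℱ ϑ) (hℱ : Monotone ℱ) {t : ℕ} {i : Fin T} (hi : t ≤ i) :
    Measurable[ℱ i] fun ω => scaleGrowth t (ϑ ω) :=
  (hϑ.measurable_runningScale hℱ (by lia)).div (hϑ.measurable_runningScale hℱ (by lia))

variable {κ : Type*} [Countable κ] {mΩ : MeasurableSpace Ω} {P : Measure Ω}
  {V : Ω → (Fin T → Fin d → ℝ) → EReal} {ϑ : κ → Ω → Fin T → Fin d → ℝ}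

theorem NAcond.ae_bddAbove_scaleGrowth (hNA : NAcond P ℱ V) (hℱ : Monotone ℱ)
    (hV0 : ∀ᵐ ω ∂P, V ω 0 = 0) (hϑ : ∀ k, AdaptedStrat ℱ (ϑ k))
    (hlow : ∀ᵐ ω ∂P, ∃ H : ℝ, ∀ k, (H : EReal) ≤ V ω (ϑ k ω)) (τ : Fin T)
    (hO : ∀ᵐ ω ∂P, (fun k => ϑ k ω) =O[⊤] fun k => runningScale (τ + 1) (ϑ k ω)) :
    ∀ᵐ ω ∂P, BddAbove (Set.range fun k => scaleGrowth τ (ϑ k ω)) := by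
  let F : Ω → Filter κ := fun ω => comap (fun k => scaleGrowth τ (ϑ k ω)) atTop
  let u : κ → Ω → Fin T → Fin d → ℝ := fun k ω => (runningScale (τ + 1) (ϑ k ω))⁻¹ • ϑ k ω
  have hF : ∀ i : Fin T, (τ : ℕ) ≤ i → MeasurableFilter (ℱ i) F := fun i hi =>
    .comap _ fun k => (hϑ k).measurable_scaleGrowth hℱ hi
  have hu : ∀ k, ∀ i : Fin T, (τ : ℕ) ≤ i → Measurable[ℱ i] fun ω => u k ω i := fun k i hi =>
    ((hϑ k).measurable_runningScale hℱ (by lia)).inv.smul (hϑ k i)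
  obtain ⟨x, hxm, hxbot, hx⟩ := exists_adaptedStrat_mapClusterPt hℱ τ hF hu
  have hgrowth : ∀ ω, Tendsto (fun k => scaleGrowth τ (ϑ k ω)) (F ω) atTop := fun _ =>
    tendsto_comap
  have hcluster : ∀ᵐ ω ∂P, (F ω).NeBot → MapClusterPt (x ω) (F ω) fun k => u k ω := by
    filter_upwards [hO] with ω hω hne
    obtain ⟨C, hC⟩ := Asymptotics.isBigO_top.1 hω
    refine hx ω hne (isBoundedUnder_of ⟨C, fun k => ?_⟩) fun i hi =>
      tendsto_inv_runningScale_smul_apply_zero (hgrowth ω) hi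
    have hpos := runningScale_pos (τ + 1) (ϑ k ω)
    simpa [u, norm_smul, abs_of_pos hpos, inv_mul_le_iff₀' hpos] using hC k
  have hx0 : ∀ᵐ ω ∂P, x ω = 0 := hNA x hxm <| by
    filter_upwards [hV0, hlow, hcluster] with ω hω0 ⟨H, hH⟩ hω
    rcases (F ω).eq_or_neBot with hbot | hne
    · rw [hxbot ω hbot]
      exact recessionModel_zero_nonneg hω0
    · exact recessionModel_nonneg_of_mapClusterPt
        (tendsto_atTop_mono (fun k => scaleGrowth_le_runningScale τ (ϑ k ω)) (hgrowth ω)) hH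
        (hω hne)
  filter_upwards [hcluster, hx0] with ω hω hω0
  refine bddAbove_range_of_comap_atTop_eq_bot (not_neBot.1 fun hne => ?_)
  have hzero : MapClusterPt ‖x ω τ‖ (F ω) fun k => ‖u k ω τ‖ :=
    ((hω hne).continuousAt_comp (continuous_apply τ).continuousAt).continuousAt_comp
      continuous_norm.continuousAt
  have hone : Tendsto (fun k => ‖u k ω τ‖) (F ω) (𝓝 1) :=
    tendsto_norm_inv_runningScale_smul_apply_one (hgrowth ω)
  have hnorm : ‖x ω τ‖ = 1 := eq_of_nhds_neBot (NeBot.mono hzero (inf_le_inf_left _ hone))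
  simp [hω0] at hnorm

theorem NAcond.ae_isBigO_runningScale (hNA : NAcond P ℱ V) (hℱ : Monotone ℱ)
    (hV0 : ∀ᵐ ω ∂P, V ω 0 = 0) (hϑ : ∀ k, AdaptedStrat ℱ (ϑ k))
    (hlow : ∀ᵐ ω ∂P, ∃ H : ℝ, ∀ k, (H : EReal) ≤ V ω (ϑ k ω)) {t : ℕ} (ht : t ≤ T) :
    ∀ᵐ ω ∂P, (fun k => ϑ k ω) =O[⊤] fun k => runningScale t (ϑ k ω) := by
  induction ht using Nat.decreasingInduction with
  | self =>
    refine .of_forall fun ω => Asymptotics.isBigO_top.2 ⟨1, fun k => ?_⟩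
    rw [one_mul]
    exact (norm_le_runningScale _).trans (le_abs_self _)
  | of_succ t ht ih =>
    filter_upwards [ih, hNA.ae_bddAbove_scaleGrowth hℱ hV0 hϑ hlow ⟨t, ht⟩ ih] with ω hO hbdd
    exact hO.trans (isBigO_runningScale_succ hbdd)

theorem NAcond.ae_bounded (hNA : NAcond P ℱ V) (hℱ : Monotone ℱ) (hV0 : ∀ᵐ ω ∂P, V ω 0 = 0)
    (hϑ : ∀ k, AdaptedStrat ℱ (ϑ k))
    (hlow : ∀ᵐ ω ∂P, ∃ H : ℝ, ∀ k, (H : EReal) ≤ V ω (ϑ k ω)) :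
    ∀ᵐ ω ∂P, ∃ M, ∀ k, ‖ϑ k ω‖ ≤ M := by
  filter_upwards [hNA.ae_isBigO_runningScale hℱ hV0 hϑ hlow T.zero_le] with ω hω
  obtain ⟨C, hC⟩ := Asymptotics.isBigO_top.1 hω
  exact ⟨C, fun k => by simpa [runningScale_zero] using hC k⟩

theorem NAcond.exists_adaptedStrat_ae_mapClusterPt (hNA : NAcond P ℱ V) (hℱ : Monotone ℱ)
    (hV0 : ∀ᵐ ω ∂P, V ω 0 = 0) (hϑ : ∀ k, AdaptedStrat ℱ (ϑ k))
    (hlow : ∀ᵐ ω ∂P, ∃ H : ℝ, ∀ k, (H : EReal) ≤ V ω (ϑ k ω)) (l : Filter κ) [l.NeBot]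
    [l.IsCountablyGenerated] :
    ∃ x, AdaptedStrat ℱ x ∧ ∀ᵐ ω ∂P, MapClusterPt (x ω) l fun k => ϑ k ω := by
  obtain ⟨x, hxm, -, hx⟩ := exists_adaptedStrat_mapClusterPt hℱ 0 (F := fun _ => l)
    (fun _ _ => .const l) fun k i _ => hϑ k i
  refine ⟨x, hxm, ?_⟩
  filter_upwards [hNA.ae_bounded hℱ hV0 hϑ hlow] with ω hM
  exact hx ω ‹_› (isBoundedUnder_of hM) fun i hi => absurd hi (Nat.not_lt_zero _)

end NoArbitrage

theorem stmt10_general {Ω : Type*} {mΩ : MeasurableSpace Ω} {P : Measure Ω} {T d : ℕ}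
    {ℱ : Fin T → MeasurableSpace Ω} (hℱ : Monotone ℱ) {V : Ω → (Fin T → Fin d → ℝ) → EReal}
    (hV0 : ∀ᵐ ω ∂P, V ω 0 = 0) (hVusc : ∀ᵐ ω ∂P, UpperSemicontinuous (V ω))
    (hNA : NAcond P ℱ V) {h : ℕ → Ω → ℝ}
    (hmem : ∀ k, ∃ ϑ, AdaptedStrat ℱ ϑ ∧ ∀ᵐ ω ∂P, (h k ω : EReal) ≤ V ω (ϑ ω))
    {g : Ω → ℝ} (hg : TendstoInMeasure P h atTop g) :
    ∃ ϑ, AdaptedStrat ℱ ϑ ∧ ∀ᵐ ω ∂P, (g ω : EReal) ≤ V ω (ϑ ω) := by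
  obtain ⟨φ, -, hφ⟩ := hg.exists_seq_tendsto_ae
  choose ϑ hϑ hϑle using fun k => hmem (φ k)
  have hle : ∀ᵐ ω ∂P, ∀ k, (h (φ k) ω : EReal) ≤ V ω (ϑ k ω) := ae_all_iff.2 hϑle
  have hlow : ∀ᵐ ω ∂P, ∃ H : ℝ, ∀ k, (H : EReal) ≤ V ω (ϑ k ω) := by
    filter_upwards [hφ, hle] with ω hω hleω
    obtain ⟨H, hH⟩ := hω.bddBelow_range
    exact ⟨H, fun k => (EReal.coe_le_coe_iff.2 (hH (Set.mem_range_self k))).trans (hleω k)⟩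
  obtain ⟨x, hxm, hx⟩ := hNA.exists_adaptedStrat_ae_mapClusterPt hℱ hV0 hϑ hlow atTop
  refine ⟨x, hxm, ?_⟩
  filter_upwards [hφ, hle, hx, hVusc] with ω hω hleω hxω husc
  exact le_of_upperSemicontinuousAt_of_mapClusterPt (husc (x ω)) hxω
    (EReal.tendsto_coe.2 hω) hleω

/-- for a normal integrand market model satisfying NA, the set `𝒞` of
superhedgeable claims is closed with respect to convergence in probability. -/
theorem stmt10 {Ω : Type*} {mΩ : MeasurableSpace Ω} (P : Measure Ω) [IsProbabilityMeasure P]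
    (T d : ℕ) (hT : 1 ≤ T) (hd : 1 ≤ d)
    (ℱ : Fin T → MeasurableSpace Ω) (hℱmono : Monotone ℱ) (hℱle : ∀ t, ℱ t ≤ mΩ)
    -- V is a normal integrand market model:
    (V : Ω → (Fin T → Fin d → ℝ) → EReal)
    (hVjm : Measurable (Function.uncurry V))
    (hV0 : ∀ᵐ ω ∂P, V ω 0 = 0)
    (hVnotTop : ∀ ω x, V ω x ≠ ⊤)
    (hVusc : ∀ᵐ ω ∂P, UpperSemicontinuous (V ω))
    (hVhypo : HypoClosedMeas (mΩ := mΩ) V)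
    -- satisfying the no-arbitrage condition:
    (hNA : NAcond P ℱ V)
    -- a sequence of superhedgeable claims
    (h : ℕ → Ω → ℝ) (hhmeas : ∀ k, Measurable (h k))
    (hmem : ∀ k, ∃ ϑ, AdaptedStrat ℱ ϑ ∧ ∀ᵐ ω ∂P, (h k ω : EReal) ≤ V ω (ϑ ω))
    -- converging in probability to g
    (g : Ω → ℝ) (hgmeas : Measurable g)
    (htend : TendstoInMeasure P h atTop g) :
    -- then g is superhedgeable
    ∃ ϑ, AdaptedStrat ℱ ϑ ∧ ∀ᵐ ω ∂P, (g ω : EReal) ≤ V ω (ϑ ω) := by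
  exact stmt10_general hℱmono hV0 hVusc hNA hmem htend

end
end

section
/- Let V : Ω × ℝ^{dT} → ℝ ∪ {−∞} be a normal integrand market model satisfying the no-arbitrage condition NA, and let f ∈ L^0(𝓕;ℝ) be a random variable. Then there exists a finite 𝓕-measurable random variable K : Ω → ℝ such that every strategy ϑ ∈ 𝒜 with V(·,ϑ(·)) ≥ f a.s. satisfies |ϑ| ≤ K almost surely. -/
open MeasureTheory Filter Topology
open scoped ENNReal

noncomputable section

/-!
Reveal the information available at time `t` already at the start; backward induction on `t` bounds
every strategy superhedging `f` by a random multiple of one plus the size of its positions before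
`t`, and at `t = 0` there are no such positions. In the induction step the growth of these
strategies at time `t` must be bounded by an `ℱ t`-measurable random variable. If it were not,
concatenating strategies on `ℱ t`-measurable events would give a sequence of superhedging strategies
whose growth at `t` tends to infinity with positive probability. Divided by their size up to time
`t`, they stay bounded by the induction hypothesis, so a measurable subsequence converges. The limit
lies in the asymptotic cone of the superhedging set, hence is a recession direction of `V`; it
vanishes before `t`, hence is adapted; and it has norm one up to `t`, contradicting no arbitrage.
-/

section RandomIndex

variable {Ω β : Type*} {m : MeasurableSpace Ω}

theorem measurable_apply_randomIndex [MeasurableSpace β] {u : ℕ → Ω → β}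
    (hu : ∀ n, Measurable (u n)) {N : Ω → ℕ} (hN : Measurable N) :
    Measurable fun ω => u (N ω) ω :=
  (measurable_from_prod_countable_left (f := fun p : Ω × ℕ => u p.2 p.1) hu).comp
    (measurable_id.prodMk hN)

theorem exists_measurable_randomIndex_mem {A : ℕ → Set Ω} (hA : ∀ n, MeasurableSet (A n)) :
    ∃ N : Ω → ℕ, Measurable N ∧ ∀ ω ∈ ⋃ n, A n, ω ∈ A (N ω) := by
  classical
  have hex : ∀ ω, ∃ n, ω ∈ A n ∪ (⋃ n, A n)ᶜ := fun ω => by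
    by_cases h : ω ∈ ⋃ n, A n
    · exact (Set.mem_iUnion.1 h).imp fun n => Or.inl
    · exact ⟨0, Or.inr h⟩
  exact ⟨fun ω => Nat.find (hex ω),
    measurable_find hex fun n => (hA n).union (MeasurableSet.iUnion hA).compl,
    fun ω hω => (Nat.find_spec (hex ω)).resolve_right fun h => h hω⟩

end RandomIndex

section Concatenation

variable {Ω E : Type*} {m mΩ : MeasurableSpace Ω} {P : Measure Ω}

/-- The family `S` of random elements is stable under countable concatenation along `m`-measurable
random indices (an `m`-decomposable family). Concatenation is what makes a sequence of superhedging
strategies, chosen member by member on different events, again a superhedging strategy. -/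
def StableUnderConcatenation (m : MeasurableSpace Ω) (S : Set (Ω → E)) : Prop :=
  ∀ X : ℕ → Ω → E, (∀ n, X n ∈ S) → ∀ N : Ω → ℕ, Measurable[m] N → (fun ω => X (N ω) ω) ∈ S

theorem exists_ae_greatest_of_iUnion_mem [SFinite P] {𝒞 : Set (Set Ω)} (hne : 𝒞.Nonempty)
    (hmeas : ∀ A ∈ 𝒞, NullMeasurableSet A P)
    (hUnion : ∀ A : ℕ → Set Ω, (∀ n, A n ∈ 𝒞) → ⋃ n, A n ∈ 𝒞) :
    ∃ B ∈ 𝒞, ∀ A ∈ 𝒞, A ≤ᵐ[P] B := by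
  let Q : Measure Ω := P.toFinite
  obtain ⟨v, -, hv, hvM⟩ := exists_seq_tendsto_sSup (hne.image Q) (OrderTop.bddAbove _)
  choose B hB hBv using hvM
  have hsup : sSup (Q '' 𝒞) ≤ Q (⋃ n, B n) :=
    le_of_tendsto' hv fun n => hBv n ▸ measure_mono (Set.subset_iUnion B n)
  refine ⟨⋃ n, B n, hUnion B hB, fun A hA => ?_⟩
  have hunion : (⋃ n, B n) ∪ A ∈ 𝒞 := by
    have := hUnion (fun n => Nat.casesOn n A B) (by rintro (_ | n); exacts [hA, hB n])
    rwa [← Set.union_iUnion_nat_succ, Set.union_comm] at this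
  have hle : Q ((⋃ n, B n) ∪ A) ≤ Q (⋃ n, B n) :=
    (le_sSup (Set.mem_image_of_mem Q hunion)).trans hsup
  have heq : ((⋃ n, B n) : Set Ω) =ᵐ[Q] ((⋃ n, B n) ∪ A : Set Ω) :=
    ae_eq_of_subset_of_measure_ge Set.subset_union_left hle
      ((hmeas _ (hUnion B hB)).mono_ac (toFinite_absolutelyContinuous P)) (measure_ne_top Q _)
  rw [← ae_toFinite (μ := P)]
  exact Set.subset_union_right.eventuallyLE.trans heq.symm.le

theorem StableUnderConcatenation.exists_ae_greatest_superlevel [SFinite P] (hm : m ≤ mΩ)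
    {S : Set (Ω → E)} (hS : StableUnderConcatenation m S) (hne : S.Nonempty) {ρ : E → ℝ}
    (hρ : ∀ X ∈ S, Measurable[m] fun ω => ρ (X ω)) (c : ℝ) :
    ∃ Y ∈ S, ∀ X ∈ S, ∀ᵐ ω ∂P, c < ρ (X ω) → c < ρ (Y ω) := by
  have hset : ∀ X ∈ S, MeasurableSet[m] {ω | c < ρ (X ω)} := fun X hX =>
    measurableSet_lt measurable_const (hρ X hX)
  obtain ⟨_, ⟨Y, hY, rfl⟩, hmax⟩ := exists_ae_greatest_of_iUnion_mem (P := P)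
    (hne.image fun X => {ω | c < ρ (X ω)})
    (by rintro _ ⟨X, hX, rfl⟩; exact (hm _ (hset X hX)).nullMeasurableSet)
    (fun A hA => by
      choose X hX hXA using hA
      obtain ⟨N, hN, hNmem⟩ := exists_measurable_randomIndex_mem fun n => hset (X n) (hX n)
      refine ⟨_, hS X hX N hN, ?_⟩
      simp only [← hXA]
      exact Set.Subset.antisymm (fun ω hω => Set.mem_iUnion.2 ⟨N ω, hω⟩) hNmem)
  exact ⟨Y, hY, fun X hX => hmax _ ⟨X, hX, rfl⟩⟩

theorem StableUnderConcatenation.exists_ae_le_of_not_tendsto_atTop [SFinite P] (hm : m ≤ mΩ)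
    {S : Set (Ω → E)} (hS : StableUnderConcatenation m S) {ρ : E → ℝ}
    (hρ : ∀ X ∈ S, Measurable[m] fun ω => ρ (X ω))
    (hdiv : ∀ X : ℕ → Ω → E, (∀ n, X n ∈ S) →
      ∀ᵐ ω ∂P, ¬ Tendsto (fun n => ρ (X n ω)) atTop atTop) :
    ∃ R : Ω → ℕ, Measurable[m] R ∧ ∀ X ∈ S, ∀ᵐ ω ∂P, ρ (X ω) ≤ R ω := by
  rcases S.eq_empty_or_nonempty with rfl | hne
  · exact ⟨fun _ => 0, measurable_const, by simp⟩
  choose Y hYS hYmax using fun n : ℕ => hS.exists_ae_greatest_superlevel (P := P) hm hne hρ n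
  obtain ⟨R, hR, hRmem⟩ := exists_measurable_randomIndex_mem (m := m)
    (A := fun n : ℕ => {ω | ρ (Y n ω) ≤ n}) fun n =>
      measurableSet_le (hρ _ (hYS n)) measurable_const
  refine ⟨R, hR, fun X hX => ?_⟩
  filter_upwards [hdiv Y hYS, ae_all_iff.2 fun n => hYmax n X hX] with ω hω hXY
  have hmem : ω ∈ ⋃ n : ℕ, {ω | ρ (Y n ω) ≤ n} := by
    by_contra! hnot
    simp only [Set.mem_iUnion, Set.mem_ofPred_eq, not_exists, not_le] at hnot
    exact hω (tendsto_atTop_mono (fun n => (hnot n).le) tendsto_natCast_atTop_atTop)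
  exact le_of_not_gt fun hlt => (hRmem ω hmem).not_gt (hXY (R ω) hlt)

end Concatenation

section BolzanoWeierstrass

variable {Ω : Type*}

theorem frequently_abs_sub_limsup_lt {u : ℕ → ℝ}
    (hu : IsBoundedUnder (· ≤ ·) atTop fun n => |u n|) {ε : ℝ} (hε : 0 < ε) :
    ∃ᶠ n in atTop, |u n - limsup u atTop| < ε := by
  obtain ⟨hle, hge⟩ := isBoundedUnder_le_abs.1 hu
  have hfreq : ∃ᶠ n in atTop, limsup u atTop - ε < u n :=
    frequently_lt_of_lt_limsup hge.isCoboundedUnder_le (sub_lt_self _ hε)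
  have hev : ∀ᶠ n in atTop, u n < limsup u atTop + ε :=
    eventually_lt_of_limsup_lt (lt_add_of_pos_right _ hε) hle
  refine (hfreq.and_eventually hev).mono fun n ⟨hlt, hgt⟩ => ?_
  exact abs_sub_lt_iff.2 ⟨sub_lt_iff_lt_add'.2 hgt, sub_lt_comm.1 hlt⟩

theorem exists_measurable_subseq_tendsto_real {m : MeasurableSpace Ω} {u : ℕ → Ω → ℝ}
    (hu : ∀ n, Measurable (u n)) :
    ∃ (σ : ℕ → Ω → ℕ) (z : Ω → ℝ), (∀ k, Measurable (σ k)) ∧ Measurable z ∧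
      ∀ ω, (IsBoundedUnder (· ≤ ·) atTop fun n => |u n ω|) →
        Tendsto (fun k => σ k ω) atTop atTop ∧
          Tendsto (fun k => u (σ k ω) ω) atTop (𝓝 (z ω)) := by
  let z : Ω → ℝ := fun ω => limsup (fun n => u n ω) atTop
  have hz : Measurable z := Measurable.limsup hu
  let A : ℕ → ℕ → Set Ω := fun k n => {ω | k ≤ n ∧ |u n ω - z ω| < 1 / ((k : ℝ) + 1)}
  have hA : ∀ k n, MeasurableSet (A k n) := fun k n =>
    (MeasurableSet.const _).inter (measurableSet_lt ((hu n).sub hz).abs measurable_const)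
  choose σ hσ hσmem using fun k => exists_measurable_randomIndex_mem (hA k)
  refine ⟨σ, z, hσ, hz, fun ω hω => ?_⟩
  have hmem : ∀ k, ω ∈ A k (σ k ω) := fun k => hσmem k ω <| by
    obtain ⟨n, hn, hkn⟩ := ((frequently_abs_sub_limsup_lt hω
      (Nat.one_div_pos_of_nat (n := k))).and_eventually (eventually_ge_atTop k)).exists
    exact Set.mem_iUnion.2 ⟨n, hkn, hn⟩
  exact ⟨tendsto_atTop_mono (fun k => (hmem k).1) tendsto_id,
    tendsto_iff_norm_sub_tendsto_zero.2 <| squeeze_zero (fun _ => norm_nonneg _)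
      (fun k => (hmem k).2.le) tendsto_one_div_add_atTop_nhds_zero_nat⟩

-- The coordinates are treated in the order of their times: the random indices extracted so far are
-- then measurable at the time of the next coordinate, so no limit looks into the future.
theorem exists_adapted_subseq_tendsto_coord {ι κ : Type*} [LinearOrder κ]
    {m : κ → MeasurableSpace Ω} (hm : Monotone m) (τ : ι → κ) {u : ℕ → Ω → ι → ℝ}
    (hu : ∀ i n, Measurable[m (τ i)] fun ω => u n ω i) (s : Finset ι) :
    ∃ (σ : ℕ → Ω → ℕ) (z : Ω → ι → ℝ),
      (∀ r, (∀ i ∈ s, τ i ≤ r) → ∀ k, Measurable[m r] (σ k)) ∧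
      (∀ i, Measurable[m (τ i)] fun ω => z ω i) ∧
      ∀ ω, (∀ i ∈ s, IsBoundedUnder (· ≤ ·) atTop fun n => |u n ω i|) →
        Tendsto (fun k => σ k ω) atTop atTop ∧
          ∀ i ∈ s, Tendsto (fun k => u (σ k ω) ω i) atTop (𝓝 (z ω i)) := by
  classical
  induction s using Finset.induction_on_max_value τ with
  | empty =>
    exact ⟨fun k _ => k, fun _ _ => 0, fun _ _ _ => measurable_const, fun _ => measurable_const,
      fun _ _ => ⟨tendsto_id, by simp⟩⟩
  | insert a s has hmax ih =>
    obtain ⟨σ, z, hσ, hz, hlim⟩ := ih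
    have hσa : ∀ k, Measurable[m (τ a)] (σ k) := hσ (τ a) hmax
    obtain ⟨ρ, y, hρ, hy, hylim⟩ := exists_measurable_subseq_tendsto_real (m := m (τ a))
      fun k => measurable_apply_randomIndex (hu a) (hσa k)
    refine ⟨fun k ω => σ (ρ k ω) ω, fun ω => Function.update (z ω) a (y ω),
      fun r hr k => ?_, fun i => ?_, fun ω hb => ?_⟩
    · exact (measurable_apply_randomIndex hσa (hρ k)).mono
        (hm (hr a (Finset.mem_insert_self a s))) le_rfl
    · rcases eq_or_ne i a with rfl | hi
      · simpa using hy
      · simpa [hi] using hz i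
    · obtain ⟨hbs, hba⟩ := Finset.forall_mem_insert .. |>.1 hb |>.symm
      obtain ⟨hσtop, hσlim⟩ := hlim ω hbs
      obtain ⟨C, hC⟩ := hba
      obtain ⟨hρtop, hρlim⟩ := hylim ω ⟨C, hσtop.eventually hC⟩
      refine ⟨hσtop.comp hρtop, Finset.forall_mem_insert .. |>.2 ⟨by simpa using hρlim, ?_⟩⟩
      intro i hi
      simpa [Function.comp_def, ne_of_mem_of_not_mem hi has] using (hσlim i hi).comp hρtop

theorem exists_adapted_subseq_tendsto {ι κ : Type*} [LinearOrder ι] [Fintype ι] [Fintype κ]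
    {m : ι → MeasurableSpace Ω} (hm : Monotone m) {u : ℕ → Ω → ι → κ → ℝ}
    (hu : ∀ n s, Measurable[m s] fun ω => u n ω s) :
    ∃ (σ : ℕ → Ω → ℕ) (z : Ω → ι → κ → ℝ), (∀ s, Measurable[m s] fun ω => z ω s) ∧
      ∀ ω, (IsBoundedUnder (· ≤ ·) atTop fun n => ‖u n ω‖) →
        Tendsto (fun k => σ k ω) atTop atTop ∧
          Tendsto (fun k => u (σ k ω) ω) atTop (𝓝 (z ω)) := by
  obtain ⟨σ, z, -, hz, hlim⟩ := exists_adapted_subseq_tendsto_coord hm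
    (Prod.fst : ι × κ → ι) (u := fun n ω i => u n ω i.1 i.2)
    (fun i n => (measurable_pi_apply i.2).comp (hu n i.1)) Finset.univ
  refine ⟨σ, fun ω s j => z ω (s, j),
    fun s => @measurable_pi_lambda _ _ _ (m s) _ _ fun j => hz (s, j), fun ω hω => ?_⟩
  have hcoord : ∀ i : ι × κ, ∀ n, |u n ω i.1 i.2| ≤ ‖u n ω‖ := fun i n =>
    (norm_le_pi_norm (u n ω i.1) i.2).trans (norm_le_pi_norm (u n ω) i.1)
  obtain ⟨hσ, hσlim⟩ := hlim ω fun i _ => hω.mono_le (.of_forall (hcoord i))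
  exact ⟨hσ, tendsto_pi_nhds.2 fun s => tendsto_pi_nhds.2 fun j => hσlim (s, j) (Finset.mem_univ _)⟩

end BolzanoWeierstrass

section Past

variable {T : ℕ} {E : Type*}

/-- The part of the path `x` strictly before time `t`, extended by zero. The time `t` ranges over
`Fin (T + 1)`, so that `past 0 x = 0` and `past (Fin.last T) x = x`. -/
def past [Zero E] (t : Fin (T + 1)) (x : Fin T → E) : Fin T → E :=
  {s : Fin T | s.castSucc < t}.indicator x

theorem past_zero [Zero E] (x : Fin T → E) : past 0 x = 0 := by
  simpa [past] using Set.indicator_empty' x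

theorem past_last [Zero E] (x : Fin T → E) : past (Fin.last T) x = x := by
  simp [past, Fin.castSucc_lt_last]

theorem past_smul {R : Type*} [Zero E] [SMulZeroClass R E] (t : Fin (T + 1)) (c : R)
    (x : Fin T → E) : past t (c • x) = c • past t x :=
  Set.indicator_const_smul _ c x

theorem continuous_past [Zero E] [TopologicalSpace E] (t : Fin (T + 1)) :
    Continuous (past t : (Fin T → E) → Fin T → E) := by
  refine continuous_pi fun s => ?_
  by_cases hs : s.castSucc < t
  · simpa [past, hs] using continuous_apply s
  · simpa [past, hs] using continuous_const

theorem measurable_past [Zero E] [MeasurableSpace E] {Ω : Type*} {m : MeasurableSpace Ω}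
    {t : Fin (T + 1)} {ϑ : Ω → Fin T → E}
    (hϑ : ∀ s : Fin T, s.castSucc < t → Measurable fun ω => ϑ ω s) :
    Measurable fun ω => past t (ϑ ω) := by
  refine measurable_pi_lambda _ fun s => ?_
  by_cases hs : s.castSucc < t
  · simpa [past, hs] using hϑ s hs
  · simp [past, hs]

end Past

section Growth

variable {T : ℕ} {E : Type*} [NormedAddCommGroup E]

/-- The factor by which the path `x` grows at time `t` relative to its past; one is added to the
denominator because the past may vanish. -/
def growth (t : Fin T) (x : Fin T → E) : ℝ :=
  ‖past t.succ x‖ / (1 + ‖past t.castSucc x‖)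

/-- The path `x` rescaled so that its part up to and including time `t` has norm one. It is zero
when that part of `x` vanishes. -/
def normalizeAt [NormedSpace ℝ E] (t : Fin T) (x : Fin T → E) : Fin T → E :=
  ‖past t.succ x‖⁻¹ • x

section Measurability

variable [MeasurableSpace E] [BorelSpace E] [SecondCountableTopology E] {Ω : Type*}
  {m : MeasurableSpace Ω} {t : Fin T} {ϑ : Ω → Fin T → E}

theorem measurable_growth (hϑ : ∀ s ≤ t, Measurable fun ω => ϑ ω s) :
    Measurable fun ω => growth t (ϑ ω) :=
  (measurable_past fun s hs => hϑ s (Fin.castSucc_lt_succ_iff.1 hs)).norm.div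
    ((measurable_past fun s hs => hϑ s (Fin.castSucc_lt_castSucc_iff.1 hs).le).norm.const_add 1)

theorem measurable_normalizeAt_apply [NormedSpace ℝ E]
    (hϑ : ∀ s ≤ t, Measurable fun ω => ϑ ω s) {s : Fin T} (hs : Measurable fun ω => ϑ ω s) :
    Measurable fun ω => normalizeAt t (ϑ ω) s :=
  (measurable_past fun r hr => hϑ r (Fin.castSucc_lt_succ_iff.1 hr)).norm.inv.smul hs

end Measurability

theorem growth_le_norm_past_succ (t : Fin T) (x : Fin T → E) : growth t x ≤ ‖past t.succ x‖ :=
  div_le_self (norm_nonneg _) (le_add_of_nonneg_right (norm_nonneg _))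

theorem tendsto_norm_past_succ_atTop {ι : Type*} {l : Filter ι} {t : Fin T} {x : ι → Fin T → E}
    (hx : Tendsto (fun n => growth t (x n)) l atTop) :
    Tendsto (fun n => ‖past t.succ (x n)‖) l atTop :=
  tendsto_atTop_mono (fun n => growth_le_norm_past_succ t (x n)) hx

section Normalize

variable [NormedSpace ℝ E] {t : Fin T}

theorem norm_past_succ_normalizeAt {x : Fin T → E} (hx : past t.succ x ≠ 0) :
    ‖past t.succ (normalizeAt t x)‖ = 1 := by
  rw [normalizeAt, past_smul, norm_smul, norm_inv, norm_norm,
    inv_mul_cancel₀ (norm_ne_zero_iff.2 hx)]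

theorem norm_past_castSucc_normalizeAt_le (t : Fin T) (x : Fin T → E) :
    ‖past t.castSucc (normalizeAt t x)‖ ≤ (growth t x)⁻¹ := by
  rw [normalizeAt, past_smul, norm_smul, norm_inv, norm_norm, growth, inv_div, inv_mul_eq_div]
  gcongr
  exact le_add_of_nonneg_left zero_le_one

theorem norm_normalizeAt_le {x : Fin T → E} {K : ℝ} (hK : ‖x‖ ≤ K * (1 + ‖past t.succ x‖))
    (hx : 1 ≤ ‖past t.succ x‖) : ‖normalizeAt t x‖ ≤ 2 * K := by
  have hK0 : 0 ≤ K := nonneg_of_mul_nonneg_left ((norm_nonneg x).trans hK) (by positivity)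
  rw [normalizeAt, norm_smul, norm_inv, norm_norm, inv_mul_le_iff₀ (zero_lt_one.trans_le hx)]
  calc ‖x‖ ≤ K * (1 + ‖past t.succ x‖) := hK
    _ ≤ K * (‖past t.succ x‖ + ‖past t.succ x‖) := by gcongr
    _ = ‖past t.succ x‖ * (2 * K) := by ring

variable {ι : Type*} {l : Filter ι} {x : ι → Fin T → E}

theorem isBoundedUnder_norm_normalizeAt (hx : Tendsto (fun n => growth t (x n)) l atTop) {K : ℝ}
    (hK : ∀ n, ‖x n‖ ≤ K * (1 + ‖past t.succ (x n)‖)) :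
    IsBoundedUnder (· ≤ ·) l fun n => ‖normalizeAt t (x n)‖ :=
  ⟨2 * K, ((tendsto_norm_past_succ_atTop hx).eventually_ge_atTop 1).mono fun n =>
    norm_normalizeAt_le (hK n)⟩

variable [l.NeBot] {z : Fin T → E}

theorem past_castSucc_eq_zero_of_tendsto_normalizeAt
    (hx : Tendsto (fun n => growth t (x n)) l atTop)
    (hz : Tendsto (fun n => normalizeAt t (x n)) l (𝓝 z)) : past t.castSucc z = 0 :=
  tendsto_nhds_unique (((continuous_past t.castSucc).tendsto z).comp hz)
    (squeeze_zero_norm (fun n => norm_past_castSucc_normalizeAt_le t (x n)) hx.inv_tendsto_atTop)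

theorem norm_past_succ_eq_one_of_tendsto_normalizeAt
    (hx : Tendsto (fun n => growth t (x n)) l atTop)
    (hz : Tendsto (fun n => normalizeAt t (x n)) l (𝓝 z)) : ‖past t.succ z‖ = 1 := by
  refine tendsto_nhds_unique_of_eventuallyEq
    (((continuous_past t.succ).norm.tendsto z).comp hz) tendsto_const_nhds ?_
  filter_upwards [(tendsto_norm_past_succ_atTop hx).eventually_gt_atTop 0] with n hn
  exact norm_past_succ_normalizeAt (norm_pos_iff.1 hn)

theorem mem_asymptoticCone_of_tendsto_normalizeAt {C : Set (Fin T → E)}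
    (hx : Tendsto (fun n => growth t (x n)) l atTop)
    (hz : Tendsto (fun n => normalizeAt t (x n)) l (𝓝 z)) (hC : ∀ n, x n ∈ C) :
    z ∈ asymptoticCone ℝ C := by
  have hr := tendsto_norm_past_succ_atTop hx
  refine (hr.atTop_smul_nhds_tendsto_asymptoticNhds hz).frequently (Eventually.frequently ?_)
  filter_upwards [hr.eventually_gt_atTop 0] with n hn
  rw [normalizeAt, smul_inv_smul₀ hn.ne']
  exact hC n

end Normalize

end Growth

section AdaptedSelections

variable {Ω : Type*} {mΩ : MeasurableSpace Ω} {P : Measure Ω} {T d : ℕ}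
  {ℱ : Fin T → MeasurableSpace Ω} {C : Ω → Set (Fin T → Fin d → ℝ)}

/-- No nonzero adapted strategy takes almost all of its values in the asymptotic cones of the random
set `C`. For the superlevel sets of a market model this is the form in which NA is used. -/
def NoAdaptedRecession (P : Measure Ω) (ℱ : Fin T → MeasurableSpace Ω)
    (C : Ω → Set (Fin T → Fin d → ℝ)) : Prop :=
  ∀ ϑ, AdaptedStrat ℱ ϑ → (∀ᵐ ω ∂P, ϑ ω ∈ asymptoticCone ℝ (C ω)) → ∀ᵐ ω ∂P, ϑ ω = 0

/-- The selections of the random set `C` that are adapted once the information available at time `t`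
is revealed at the start: the position at time `s` is known at every time `u` after both `s`
and `t`. At `t = Fin.last T` there is no such `u` and adaptedness is void. -/
def revealedSelections (P : Measure Ω) (ℱ : Fin T → MeasurableSpace Ω)
    (C : Ω → Set (Fin T → Fin d → ℝ)) (t : Fin (T + 1)) : Set (Ω → Fin T → Fin d → ℝ) :=
  {ϑ | (∀ s u : Fin T, s ≤ u → t ≤ u.castSucc → Measurable[ℱ u] fun ω => ϑ ω s) ∧
    ∀ᵐ ω ∂P, ϑ ω ∈ C ω}

theorem revealedSelections_mono : Monotone (revealedSelections P ℱ C) :=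
  fun _ _ htt' _ hϑ => ⟨fun s u hsu htu => hϑ.1 s u hsu (htt'.trans htu), hϑ.2⟩

theorem mem_revealedSelections_zero (hℱ : Monotone ℱ) {ϑ : Ω → Fin T → Fin d → ℝ}
    (hϑ : AdaptedStrat ℱ ϑ) (hC : ∀ᵐ ω ∂P, ϑ ω ∈ C ω) : ϑ ∈ revealedSelections P ℱ C 0 :=
  ⟨fun s _ hsu _ => (hϑ s).mono (hℱ hsu) le_rfl, hC⟩

theorem measurable_growth_of_mem_revealedSelections {t : Fin T} {ϑ : Ω → Fin T → Fin d → ℝ}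
    (hϑ : ϑ ∈ revealedSelections P ℱ C t.castSucc) :
    Measurable[ℱ t] fun ω => growth t (ϑ ω) :=
  measurable_growth (m := ℱ t) fun s hs => hϑ.1 s t hs le_rfl

theorem measurable_normalizeAt_apply_of_mem_revealedSelections {t : Fin T}
    {ϑ : Ω → Fin T → Fin d → ℝ} (hϑ : ϑ ∈ revealedSelections P ℱ C t.castSucc) (s : Fin T) :
    Measurable[ℱ (max t s)] fun ω => normalizeAt t (ϑ ω) s :=
  have htu : t.castSucc ≤ (max t s).castSucc := Fin.castSucc_le_castSucc_iff.2 (le_max_left t s)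
  measurable_normalizeAt_apply (m := ℱ (max t s))
    (fun r hr => hϑ.1 r (max t s) (hr.trans (le_max_left t s)) htu)
    (hϑ.1 s (max t s) (le_max_right t s) htu)

theorem stableUnderConcatenation_revealedSelections (hℱ : Monotone ℱ) (t : Fin T) :
    StableUnderConcatenation (ℱ t) (revealedSelections P ℱ C t.castSucc) := by
  refine fun X hX N hN => ⟨fun s u hsu htu => ?_, ?_⟩
  · exact measurable_apply_randomIndex (m := ℱ u) (u := fun n ω => X n ω s)
      (fun n => (hX n).1 s u hsu htu) (hN.mono (hℱ htu) le_rfl)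
  · filter_upwards [ae_all_iff.2 fun n => (hX n).2] with ω hω using hω (N ω)

theorem adaptedStrat_indicator_sub_past (hℱ : Monotone ℱ) {t : Fin T} {B : Set Ω}
    (hB : MeasurableSet[ℱ t] B) {z : Ω → Fin T → Fin d → ℝ}
    (hz : ∀ s, Measurable[ℱ (max t s)] fun ω => z ω s) :
    AdaptedStrat ℱ (B.indicator fun ω => z ω - past t.castSucc (z ω)) := by
  intro s
  rcases lt_or_ge s t with hs | hs
  · have hzero : (fun ω => B.indicator (fun ω => z ω - past t.castSucc (z ω)) ω s) = 0 := by
      funext ω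
      by_cases hω : ω ∈ B <;> simp [hω, past, hs]
    exact hzero ▸ measurable_const
  · have hind : (fun ω => B.indicator (fun ω => z ω - past t.castSucc (z ω)) ω s) =
        B.indicator fun ω => z ω s := by
      funext ω
      by_cases hω : ω ∈ B <;> simp [hω, past, hs.not_gt]
    have hzs := hz s
    rw [max_eq_right hs] at hzs
    rw [hind]
    exact hzs.indicator (hℱ hs _ hB)

theorem ae_not_tendsto_growth_atTop (hℱ : Monotone ℱ) (hC : NoAdaptedRecession P ℱ C) {t : Fin T}
    {K : Ω → ℕ} {X : ℕ → Ω → Fin T → Fin d → ℝ}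
    (hX : ∀ n, X n ∈ revealedSelections P ℱ C t.castSucc)
    (hK : ∀ n, ∀ᵐ ω ∂P, ‖X n ω‖ ≤ K ω * (1 + ‖past t.succ (X n ω)‖)) :
    ∀ᵐ ω ∂P, ¬ Tendsto (fun n => growth t (X n ω)) atTop atTop := by
  let B : Set Ω := {ω | Tendsto (fun n => growth t (X n ω)) atTop atTop}
  have hB : MeasurableSet[ℱ t] B := measurableSet_tendsto atTop fun n =>
    measurable_growth_of_mem_revealedSelections (hX n)
  obtain ⟨σ, z, hz, hlim⟩ := exists_adapted_subseq_tendsto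
    (hℱ.comp fun _ _ h => max_le_max_left t h)
    fun n => measurable_normalizeAt_apply_of_mem_revealedSelections (hX n)
  have hXC : ∀ᵐ ω ∂P, ∀ n, X n ω ∈ C ω := ae_all_iff.2 fun n => (hX n).2
  have hzB : ∀ᵐ ω ∂P, ω ∈ B →
      z ω ∈ asymptoticCone ℝ (C ω) ∧ past t.castSucc (z ω) = 0 ∧ ‖past t.succ (z ω)‖ = 1 := by
    filter_upwards [ae_all_iff.2 hK, hXC] with ω hKω hCω hωB
    obtain ⟨hσ, hconv⟩ := hlim ω (isBoundedUnder_norm_normalizeAt hωB hKω)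
    have hgrowth := Tendsto.comp hωB hσ
    exact ⟨mem_asymptoticCone_of_tendsto_normalizeAt hgrowth hconv fun k => hCω (σ k ω),
      past_castSucc_eq_zero_of_tendsto_normalizeAt hgrowth hconv,
      norm_past_succ_eq_one_of_tendsto_normalizeAt hgrowth hconv⟩
  -- Subtracting the past, which vanishes on `B`, makes the limit adapted before time `t`.
  let ϑ : Ω → Fin T → Fin d → ℝ := B.indicator fun ω => z ω - past t.castSucc (z ω)
  have hϑ : AdaptedStrat ℱ ϑ := adaptedStrat_indicator_sub_past hℱ hB hz
  have hϑcone : ∀ᵐ ω ∂P, ϑ ω ∈ asymptoticCone ℝ (C ω) := by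
    filter_upwards [hzB, hXC] with ω hω hCω
    by_cases hωB : ω ∈ B
    · simpa [ϑ, hωB, (hω hωB).2.1] using (hω hωB).1
    · simpa [ϑ, hωB] using zero_mem_asymptoticCone.2 ⟨X 0 ω, hCω 0⟩
  filter_upwards [hC ϑ hϑ hϑcone, hzB] with ω hϑ0 hω hωB
  obtain ⟨-, hpast, hnorm⟩ := hω hωB
  have hz0 : z ω = 0 := by simpa [ϑ, show ω ∈ B from hωB, hpast] using hϑ0
  simp [hz0, past] at hnorm

theorem exists_norm_le_mul_one_add_norm_past [SFinite P] (hℱ : Monotone ℱ)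
    (hℱle : ∀ t, ℱ t ≤ mΩ) (hC : NoAdaptedRecession P ℱ C) (t : Fin (T + 1)) :
    ∃ K : Ω → ℕ, Measurable K ∧ ∀ ϑ ∈ revealedSelections P ℱ C t,
      ∀ᵐ ω ∂P, ‖ϑ ω‖ ≤ K ω * (1 + ‖past t (ϑ ω)‖) := by
  induction t using Fin.reverseInduction with
  | last =>
    exact ⟨fun _ => 1, measurable_const, fun ϑ _ => ae_of_all _ fun ω => by simp [past_last]⟩
  | cast t ih =>
    obtain ⟨K, hK, hKbound⟩ := ih
    have hsub : revealedSelections P ℱ C t.castSucc ⊆ revealedSelections P ℱ C t.succ :=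
      revealedSelections_mono t.castSucc_le_succ
    obtain ⟨R, hR, hRbound⟩ :=
      (stableUnderConcatenation_revealedSelections hℱ t).exists_ae_le_of_not_tendsto_atTop
        (hℱle t) (fun ϑ hϑ => measurable_growth_of_mem_revealedSelections hϑ)
        fun X hX => ae_not_tendsto_growth_atTop hℱ hC hX fun n => hKbound _ (hsub (hX n))
    refine ⟨fun ω => K ω * (1 + R ω), hK.mul ((hR.mono (hℱle t) le_rfl).const_add 1),
      fun ϑ hϑ => ?_⟩
    filter_upwards [hKbound ϑ (hsub hϑ), hRbound ϑ hϑ] with ω hKω hRω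
    have hsucc : ‖past t.succ (ϑ ω)‖ ≤ R ω * (1 + ‖past t.castSucc (ϑ ω)‖) :=
      (div_le_iff₀ (by positivity)).1 hRω
    calc ‖ϑ ω‖ ≤ K ω * (1 + ‖past t.succ (ϑ ω)‖) := hKω
      _ ≤ K ω * ((1 + R ω) * (1 + ‖past t.castSucc (ϑ ω)‖)) := by
        gcongr
        linarith [norm_nonneg (past t.castSucc (ϑ ω))]
      _ = (K ω * (1 + R ω) : ℕ) * (1 + ‖past t.castSucc (ϑ ω)‖) := by push_cast; ring

theorem exists_measurable_norm_bound_of_noAdaptedRecession [SFinite P] (hℱ : Monotone ℱ)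
    (hℱle : ∀ t, ℱ t ≤ mΩ) (hC : NoAdaptedRecession P ℱ C) :
    ∃ K : Ω → ℝ, Measurable K ∧ ∀ ϑ, AdaptedStrat ℱ ϑ → (∀ᵐ ω ∂P, ϑ ω ∈ C ω) →
      ∀ᵐ ω ∂P, ‖ϑ ω‖ ≤ K ω := by
  obtain ⟨K, hK, hbound⟩ := exists_norm_le_mul_one_add_norm_past hℱ hℱle hC 0
  refine ⟨fun ω => K ω, measurable_from_top.comp hK, fun ϑ hϑ hϑC => ?_⟩
  filter_upwards [hbound ϑ (mem_revealedSelections_zero hℱ hϑ hϑC)] with ω hω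
  simpa [past_zero] using hω

end AdaptedSelections

section MarketModel

variable {Ω : Type*} {mΩ : MeasurableSpace Ω} {P : Measure Ω} {T d : ℕ}
  {ℱ : Fin T → MeasurableSpace Ω} {V : Ω → (Fin T → Fin d → ℝ) → EReal}

theorem recessionModel_nonneg_of_mem_asymptoticCone {ω : Ω} {c : ℝ} {z : Fin T → Fin d → ℝ}
    (hz : z ∈ asymptoticCone ℝ {x | (c : EReal) ≤ V ω x}) : 0 ≤ recessionModel V ω z := by
  rw [mem_asymptoticCone_iff, AffineSpace.asymptoticNhds_eq_smul, ← map₂_smul,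
    ← map_prod_eq_map₂, frequently_map] at hz
  refine le_iInf fun l => ?_
  have hlim : Tendsto (fun p : ℝ × (Fin T → Fin d → ℝ) => ((p.1⁻¹ * c : ℝ) : EReal))
      (atTop ×ˢ 𝓝 z) (𝓝 0) := by
    have := (tendsto_inv_atTop_zero.comp (tendsto_fst (f := atTop) (g := 𝓝 z))).mul_const c
    rw [zero_mul] at this
    exact (continuous_coe_real_ereal.tendsto 0).comp this
  have hnear : ∀ᶠ p : ℝ × (Fin T → Fin d → ℝ) in atTop ×ˢ 𝓝 z,
      l.1 < p.1 ∧ ‖p.2 - z‖ < 1 / l.1 :=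
    (eventually_gt_atTop l.1).prod_mk (eventually_norm_sub_lt z (one_div_pos.2 l.2))
  refine le_of_tendsto_of_frequently hlim ((hz.and_eventually hnear).mono ?_)
  rintro ⟨δ, x⟩ ⟨hVc, hδ, hx⟩
  have hpos : (0 : EReal) ≤ (δ⁻¹ : ℝ) := EReal.coe_nonneg.2 (inv_nonneg.2 (l.2.trans hδ).le)
  rw [EReal.coe_mul]
  refine (mul_le_mul_of_nonneg_left hVc hpos).trans ?_
  exact le_iSup₂_of_le (⟨δ, hδ⟩ : {δ : ℝ // l.1 < δ})
    (⟨x, hx⟩ : {x : Fin T → Fin d → ℝ // ‖x - z‖ < 1 / l.1}) le_rfl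

theorem NAcond.noAdaptedRecession (hNA : NAcond P ℱ V) (f : Ω → ℝ) :
    NoAdaptedRecession P ℱ fun ω => {x | (f ω : EReal) ≤ V ω x} :=
  fun ϑ hϑ hcone => hNA ϑ hϑ (hcone.mono fun _ => recessionModel_nonneg_of_mem_asymptoticCone)

theorem stmt11_general [SFinite P] (hℱ : Monotone ℱ) (hℱle : ∀ t, ℱ t ≤ mΩ)
    (hNA : NAcond P ℱ V) (f : Ω → ℝ) :
    ∃ K : Ω → ℝ, Measurable K ∧
      ∀ ϑ, AdaptedStrat ℱ ϑ → (∀ᵐ ω ∂P, (f ω : EReal) ≤ V ω (ϑ ω)) →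
        ∀ᵐ ω ∂P, ‖ϑ ω‖ ≤ K ω :=
  exists_measurable_norm_bound_of_noAdaptedRecession hℱ hℱle (hNA.noAdaptedRecession f)

end MarketModel

/-- for a normal integrand market model satisfying NA and a random
variable `f`, there is a finite random variable `K` bounding (a.s.) every strategy
superhedging `f`. -/
theorem stmt11 {Ω : Type*} {mΩ : MeasurableSpace Ω} (P : Measure Ω) [IsProbabilityMeasure P]
    (T d : ℕ) (hT : 1 ≤ T) (hd : 1 ≤ d)
    (ℱ : Fin T → MeasurableSpace Ω) (hℱmono : Monotone ℱ) (hℱle : ∀ t, ℱ t ≤ mΩ)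
    -- V is a normal integrand market model:
    (V : Ω → (Fin T → Fin d → ℝ) → EReal)
    (hVjm : Measurable (Function.uncurry V))
    (hV0 : ∀ᵐ ω ∂P, V ω 0 = 0)
    (hVnotTop : ∀ ω x, V ω x ≠ ⊤)
    (hVusc : ∀ᵐ ω ∂P, UpperSemicontinuous (V ω))
    (hVhypo : HypoClosedMeas (mΩ := mΩ) V)
    -- satisfying the no-arbitrage condition:
    (hNA : NAcond P ℱ V)
    (f : Ω → ℝ) (hf : Measurable f) :
    ∃ K : Ω → ℝ, Measurable K ∧
      ∀ ϑ, AdaptedStrat ℱ ϑ → (∀ᵐ ω ∂P, (f ω : EReal) ≤ V ω (ϑ ω)) →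
        ∀ᵐ ω ∂P, ‖ϑ ω‖ ≤ K ω :=
  stmt11_general hℱmono hℱle hNA f

end
end

section
/- Let V : Ω × ℝ^{dT} → ℝ ∪ {−∞} be a normal integrand market model satisfying the no-arbitrage condition NA, and let f ∈ L^0(𝓕;ℝ). Then there exists a finite 𝓕-measurable random variable M_f : Ω → ℝ such that every superhedgeable claim g ∈ 𝒞_f = { g ∈ L^0(𝓕;ℝ) : ∃ϑ ∈ 𝒜 with V(·,ϑ(·)) ≥ g ≥ f a.s. } satisfies g ≤ M_f almost surely. -/
open MeasureTheory Filter Topology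
open scoped ENNReal

noncomputable section

/-!
By exhaustion, a family of claims whose sequences are a.s. bounded above has a measurable a.s. upper
bound. Since `V ω` is upper semicontinuous, hence bounded above on compact sets, it suffices that
every sequence of strategies `ϑⁿ` with `V(ϑⁿ) ≥ f` is a.s. bounded. For this one shows, backwards in
time, that the position at `t` grows at most linearly in the positions before `t`. Where this fails,
an `ℱ t`-measurable choice of indices makes the position at `t` outgrow the past. Divide the
selected strategies by the norm of that position: the past tends to `0`, the future stays bounded by
the induction hypothesis, and an adapted cluster point is a recession direction whose position at
`t` has norm `1`, contradicting NA.
-/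

section RandomIndex

variable {Ω : Type*} {m : MeasurableSpace Ω}

lemma measurable_eval_randomIndex {β : Type*} [MeasurableSpace β] {y : ℕ → Ω → β}
    (hy : ∀ k, Measurable (y k)) {σ : Ω → ℕ} (hσ : Measurable σ) :
    Measurable fun ω => y (σ ω) ω :=
  (measurable_from_prod_countable_right (f := fun p : ℕ × Ω => y p.1 p.2) hy).comp
    (hσ.prodMk measurable_id)

lemma exists_measurable_nat_spec {q : Ω → ℕ → Prop} (hq : ∀ n, MeasurableSet {ω | q ω n}) :
    ∃ τ : Ω → ℕ, Measurable τ ∧ ∀ ω, (∃ n, q ω n) → q ω (τ ω) := by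
  classical
  have hex : ∀ ω, ∃ n, (∃ j, q ω j) → q ω n := fun ω =>
    (em (∃ j, q ω j)).elim (fun ⟨j, hj⟩ => ⟨j, fun _ => hj⟩) fun h => ⟨0, fun h' => absurd h' h⟩
  have hmeas : MeasurableSet {ω | ∃ j, q ω j} := by
    rw [Set.ofPred_exists]
    exact MeasurableSet.iUnion hq
  exact ⟨fun ω => Nat.find (hex ω), measurable_find hex fun n => hmeas.imp (hq n),
    fun ω => Nat.find_spec (hex ω)⟩

lemma exists_measurable_subseq_tendsto_of_mapClusterPt {E : Type*} [PseudoMetricSpace E]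
    [SecondCountableTopology E] [MeasurableSpace E] [OpensMeasurableSpace E]
    {y : ℕ → Ω → E} (hy : ∀ k, Measurable (y k)) {L : Ω → E} (hL : Measurable L) :
    ∃ σ : ℕ → Ω → ℕ, (∀ k, Measurable (σ k)) ∧ (∀ ω, Tendsto (σ · ω) atTop atTop) ∧
      ∀ ω, MapClusterPt (L ω) atTop (y · ω) →
        Tendsto (fun k => y (σ k ω) ω) atTop (𝓝 (L ω)) := by
  have hclose : ∀ k n : ℕ, MeasurableSet {ω | k ≤ n ∧ dist (y n ω) (L ω) < 1 / ((k : ℝ) + 1)} :=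
    fun k n => (MeasurableSet.const _).inter
      (measurableSet_lt ((hy n).dist hL) measurable_const)
  choose τ hτ hτspec using fun k => exists_measurable_nat_spec (hclose k)
  refine ⟨fun k ω => max k (τ k ω), fun k => measurable_const.max (hτ k),
    fun ω => tendsto_atTop_mono (fun k => le_max_left k (τ k ω)) tendsto_id, fun ω hω => ?_⟩
  rw [tendsto_iff_dist_tendsto_zero]
  refine squeeze_zero (fun _ => dist_nonneg) (fun k => ?_) tendsto_one_div_add_atTop_nhds_zero_nat
  have hfreq := hω.frequently (Metric.ball_mem_nhds (L ω) (Nat.one_div_pos_of_nat (n := k)))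
  obtain ⟨hk, hdist⟩ := hτspec k ω (frequently_atTop.1 hfreq k)
  simpa only [max_eq_right hk] using hdist.le

end RandomIndex

lemma exists_subseq_tendsto_of_monotone_measurableSpace {Ω ι : Type*} [LinearOrder ι]
    {G : ι → MeasurableSpace Ω} (hG : Monotone G) {y : ι → ℕ → Ω → ℝ}
    (hy : ∀ i k, Measurable[G i] (y i k)) (s : Finset ι) :
    ∃ (σ : ℕ → Ω → ℕ) (z : ι → Ω → ℝ),
      (∀ i ∈ upperBounds (s : Set ι), ∀ k, Measurable[G i] (σ k)) ∧
      (∀ ω, Tendsto (σ · ω) atTop atTop) ∧ (∀ i, Measurable[G i] (z i)) ∧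
      ∀ i ∈ s, ∀ ω, Bornology.IsBounded (Set.range (y i · ω)) →
        Tendsto (fun k => y i (σ k ω) ω) atTop (𝓝 (z i ω)) := by
  -- Extracting in increasing order keeps the limits adapted: the indices used for `i` depend only
  -- on coordinates up to `i`.
  induction s using Finset.induction_on_max with
  | empty =>
    exact ⟨fun k _ => k, fun _ _ => 0, fun _ _ _ => measurable_const, fun _ => tendsto_id,
      fun _ => measurable_const, fun i hi => absurd hi (Finset.notMem_empty i)⟩
  | insert a s ha ih =>
    obtain ⟨σ, z, hσ, hσtop, hz, hlim⟩ := ih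
    have hyσ : ∀ k, Measurable[G a] fun ω => y a (σ k ω) ω := fun k =>
      measurable_eval_randomIndex (m := G a) (hy a) (hσ a (fun j hj => (ha j hj).le) k)
    obtain ⟨ρ, hρ, hρtop, hρlim⟩ := exists_measurable_subseq_tendsto_of_mapClusterPt (m := G a)
      hyσ (Measurable.limsup hyσ)
    refine ⟨fun k ω => σ (ρ k ω) ω,
      Function.update z a fun ω => limsup (fun k => y a (σ k ω) ω) atTop,
      fun i hi k => ?_, fun ω => (hσtop ω).comp (hρtop ω), fun i => ?_, fun i hi ω hb => ?_⟩
    · have hai : a ≤ i := hi (Finset.mem_insert_self a s)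
      exact (measurable_eval_randomIndex (m := G a)
        (hσ a fun j hj => (ha j hj).le) (hρ k)).mono (hG hai) le_rfl
    · obtain rfl | hia := eq_or_ne i a
      · simpa only [Function.update_self] using Measurable.limsup hyσ
      · simpa only [Function.update_of_ne hia] using hz i
    · obtain rfl | hia := eq_or_ne i a
      · rw [Function.update_self]
        have hbσ := hb.subset (Set.range_comp_subset_range (σ · ω) (y i · ω))
        exact hρlim ω (MapClusterPt.limsup
          hbσ.bddBelow.isBoundedUnder_of_range.isCoboundedUnder_le
          hbσ.bddAbove.isBoundedUnder_of_range)
      · rw [Function.update_of_ne hia]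
        exact (hlim i (Finset.mem_of_mem_insert_of_ne hi hia) ω hb).comp (hρtop ω)

namespace AdaptedStrat

variable {Ω : Type*} {T d : ℕ} {ℱ : Fin T → MeasurableSpace Ω}

lemma exists_subseq_tendsto (hℱ : Monotone ℱ) {Y : ℕ → Ω → Fin T → Fin d → ℝ}
    (hY : ∀ k, AdaptedStrat ℱ (Y k)) :
    ∃ (σ : ℕ → Ω → ℕ) (z : Ω → Fin T → Fin d → ℝ), (∀ ω, Tendsto (σ · ω) atTop atTop) ∧
      AdaptedStrat ℱ z ∧ ∀ ω, Bornology.IsBounded (Set.range (Y · ω)) →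
        Tendsto (fun k => Y (σ k ω) ω) atTop (𝓝 (z ω)) := by
  obtain ⟨σ, z, -, hσ, hz, hlim⟩ := exists_subseq_tendsto_of_monotone_measurableSpace
    (ι := Fin T ×ₗ Fin d) (G := fun i => ℱ (ofLex i).1)
    (hℱ.comp fun i j => Prod.Lex.monotone_fst i j)
    (y := fun i k ω => Y k ω (ofLex i).1 (ofLex i).2)
    (fun i k => (measurable_pi_apply _).comp (hY k _)) Finset.univ
  refine ⟨σ, fun ω s j => z (toLex (s, j)) ω, hσ,
    fun s => @measurable_pi_lambda _ _ _ (ℱ s) _ _ fun j => hz (toLex (s, j)), fun ω hω => ?_⟩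
  refine tendsto_pi_nhds.2 fun s => tendsto_pi_nhds.2 fun j =>
    hlim (toLex (s, j)) (Finset.mem_univ _) ω ?_
  simpa only [← Set.range_comp] using! (hω.image_eval s).image_eval j

end AdaptedStrat

lemma exists_seq_forall_ae_le_iSup {Ω : Type*} {m : MeasurableSpace Ω} {μ : Measure Ω}
    {S : Set (Ω → ℝ≥0∞)} (hne : S.Nonempty) (hS : ∀ g ∈ S, AEMeasurable g μ)
    {B : Ω → ℝ≥0∞} (hB : ∫⁻ ω, B ω ∂μ ≠ ⊤) (hSB : ∀ g ∈ S, g ≤ᵐ[μ] B) :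
    ∃ u : ℕ → Ω → ℝ≥0∞, (∀ n, u n ∈ S) ∧ ∀ g ∈ S, ∀ᵐ ω ∂μ, g ω ≤ ⨆ n, u n ω := by
  let Φ : (ℕ → Ω → ℝ≥0∞) → ℝ≥0∞ := fun u => ∫⁻ ω, ⨆ n, u n ω ∂μ
  let W : Set ℝ≥0∞ := Φ '' {u | ∀ n, u n ∈ S}
  obtain ⟨g₀, hg₀⟩ := hne
  obtain ⟨w, -, hw, hwW⟩ := exists_seq_tendsto_sSup (S := W)
    ⟨_, fun _ => g₀, fun _ => hg₀, rfl⟩ (OrderTop.bddAbove _)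
  choose v hvS hv using hwW
  let u : ℕ → Ω → ℝ≥0∞ := fun n => v n.unpair.1 n.unpair.2
  have huS : ∀ n, u n ∈ S := fun n => hvS _ _
  have hmax : sSup W ≤ Φ u := le_of_tendsto' hw fun n => by
    rw [← hv n]
    refine lintegral_mono fun ω => iSup_le fun k => ?_
    simpa [u] using le_iSup (fun i => u i ω) (Nat.pair n k)
  have hfin : Φ u ≠ ⊤ := by
    refine ne_top_of_le_ne_top hB (lintegral_mono_ae ?_)
    filter_upwards [ae_all_iff.2 fun n => hSB _ (huS n)] with ω hω using iSup_le hω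
  refine ⟨u, huS, fun g hg => ?_⟩
  -- `u` maximises the integral of the supremum, so adjoining `g` cannot increase that supremum.
  have hmeas : AEMeasurable (fun ω => g ω ⊔ ⨆ n, u n ω) μ :=
    (hS g hg).sup (AEMeasurable.iSup fun n => hS _ (huS n))
  have hsup : ∫⁻ ω, g ω ⊔ ⨆ n, u n ω ∂μ ≤ sSup W := by
    refine le_sSup ⟨fun n => Nat.casesOn n g u, fun n => ?_, ?_⟩
    · cases n with
      | zero => exact hg
      | succ n => exact huS n
    · exact lintegral_congr fun ω => (sup_iSup_nat_succ _).symm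
  have hae : (fun ω => ⨆ n, u n ω) =ᵐ[μ] fun ω => g ω ⊔ ⨆ n, u n ω :=
    ae_eq_of_ae_le_of_lintegral_le (Eventually.of_forall fun ω => le_sup_right) hfin hmeas
      (hsup.trans hmax)
  filter_upwards [hae] with ω hω
  exact le_sup_left.trans hω.ge

lemma exists_measurable_ae_upperBound {Ω : Type*} {m : MeasurableSpace Ω} (μ : Measure Ω)
    [SFinite μ] {S : Set (Ω → ℝ)} (hS : ∀ g ∈ S, Measurable g)
    (hbdd : ∀ u : ℕ → Ω → ℝ, (∀ n, u n ∈ S) → ∀ᵐ ω ∂μ, BddAbove (Set.range (u · ω))) :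
    ∃ M : Ω → ℝ, Measurable M ∧ ∀ g ∈ S, ∀ᵐ ω ∂μ, g ω ≤ M ω := by
  obtain rfl | hne := S.eq_empty_or_nonempty
  · exact ⟨0, measurable_const, by simp⟩
  let h : ℝ → ℝ≥0∞ := fun x => ENNReal.ofReal x.sigmoid
  have h_mono : StrictMono h := fun x y hxy =>
    (ENNReal.ofReal_lt_ofReal_iff y.sigmoid_pos).2 (Real.sigmoid_strictMono hxy)
  have h_le_one : ∀ x, h x ≤ 1 := fun x => ENNReal.ofReal_le_one.2 x.sigmoid_le_one
  obtain ⟨v, hvS, hv⟩ := exists_seq_forall_ae_le_iSup (μ := μ.toFinite) (S := (h ∘ ·) '' S)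
    (B := 1) (hne.image _)
    (Set.forall_mem_image.2 fun g hg => (h_mono.monotone.measurable.comp (hS g hg)).aemeasurable)
    (by simp) (Set.forall_mem_image.2 fun g _ => Eventually.of_forall fun ω => h_le_one (g ω))
  choose u huS huv using hvS
  refine ⟨fun ω => ⨆ n, u n ω, Measurable.iSup fun n => hS _ (huS n), fun g hg => ?_⟩
  have hg_le := hv _ (Set.mem_image_of_mem _ hg)
  rw [ae_toFinite] at hg_le
  filter_upwards [hg_le, hbdd u huS] with ω hω hb
  refine h_mono.le_iff_le.1 (hω.trans (iSup_le fun n => ?_))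
  rw [← huv n]
  exact h_mono.monotone (le_ciSup hb n)

section Growth

variable {ι κ E : Type*} [Preorder ι] [LocallyFiniteOrderBot ι] [SeminormedAddCommGroup E]

/-- The size of the positions of `x` strictly before `t`, shifted by `1` so that it is a positive
comparison scale even when the past vanishes. -/
def pastSize (x : ι → E) (t : ι) : ℝ :=
  1 + ∑ r ∈ Finset.Iio t, ‖x r‖

/-- The position at `t` grows at most linearly in the preceding ones along the family `x`. -/
def ControlledByPast (x : κ → ι → E) (t : ι) : Prop :=
  ∃ K, ∀ n, ‖x n t‖ ≤ K * pastSize (x n) t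

/-- The position at `t` grows superlinearly in the preceding ones along the sequence `x`. The
explicit rate `k + 1` makes it nonzero from the first term on. -/
def OutgrowsPast (x : ℕ → ι → E) (t : ι) : Prop :=
  ∀ k : ℕ, ((k : ℝ) + 1) * pastSize (x k) t < ‖x k t‖

lemma one_le_pastSize (x : ι → E) (t : ι) : 1 ≤ pastSize x t :=
  le_add_of_nonneg_right (Finset.sum_nonneg fun _ _ => norm_nonneg _)

lemma norm_le_pastSize (x : ι → E) {r t : ι} (hr : r < t) : ‖x r‖ ≤ pastSize x t :=
  (Finset.single_le_sum (f := fun r => ‖x r‖) (fun _ _ => norm_nonneg _)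
    (Finset.mem_Iio.2 hr)).trans (le_add_of_nonneg_left zero_le_one)

lemma norm_mul_pastSize_le_pastSize_smul [NormedSpace ℝ E] {c : ℝ} (hc : ‖c‖ ≤ 1) (x : ι → E)
    (t : ι) : ‖c‖ * pastSize x t ≤ pastSize (c • x) t := by
  simpa only [pastSize, Pi.smul_apply, norm_smul, mul_add, mul_one, Finset.mul_sum]
    using add_le_add_left hc _

namespace ControlledByPast

lemma of_norm_le {x : κ → ι → E} {t : ι} {C : ℝ} (hx : ∀ n, ‖x n t‖ ≤ C) :
    ControlledByPast x t :=
  ⟨|C|, fun n => (hx n).trans <| (le_abs_self C).trans <|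
    le_mul_of_one_le_right (abs_nonneg C) (one_le_pastSize _ _)⟩

lemma comp {x : κ → ι → E} {t : ι} (h : ControlledByPast x t) {κ' : Type*} (σ : κ' → κ) :
    ControlledByPast (fun n => x (σ n)) t :=
  let ⟨K, hK⟩ := h
  ⟨K, fun n => hK (σ n)⟩

lemma smul [NormedSpace ℝ E] {x : κ → ι → E} {t : ι} (h : ControlledByPast x t) {c : κ → ℝ}
    (hc : ∀ n, ‖c n‖ ≤ 1) : ControlledByPast (fun n => c n • x n) t := by
  obtain ⟨K, hK⟩ := h
  refine ⟨|K|, fun n => ?_⟩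
  have hpast : 0 ≤ pastSize (x n) t := zero_le_one.trans (one_le_pastSize _ _)
  calc ‖(c n • x n) t‖ = ‖c n‖ * ‖x n t‖ := norm_smul _ _
    _ ≤ ‖c n‖ * (|K| * pastSize (x n) t) := by
      gcongr
      exact (hK n).trans (mul_le_mul_of_nonneg_right (le_abs_self K) hpast)
    _ = |K| * (‖c n‖ * pastSize (x n) t) := mul_left_comm _ _ _
    _ ≤ |K| * pastSize (c n • x n) t := by
      gcongr
      exact norm_mul_pastSize_le_pastSize_smul (hc n) _ _

lemma exists_norm_le [WellFoundedLT ι] {x : κ → ι → E} (h : ∀ t, ControlledByPast x t) (t : ι) :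
    ∃ C, ∀ n, ‖x n t‖ ≤ C := by
  induction t using WellFoundedLT.induction with
  | ind t ih =>
    choose! C hC using ih
    obtain ⟨K, hK⟩ := h t
    refine ⟨|K| * (1 + ∑ r ∈ Finset.Iio t, C r), fun n => (hK n).trans ?_⟩
    have hpast : pastSize (x n) t ≤ 1 + ∑ r ∈ Finset.Iio t, C r :=
      add_le_add_right (Finset.sum_le_sum fun r hr => hC r (Finset.mem_Iio.1 hr) n) 1
    exact mul_le_mul (le_abs_self K) hpast (zero_le_one.trans (one_le_pastSize _ _)) (abs_nonneg K)

lemma isBounded_range [WellFoundedLT ι] {x : κ → ι → E} (h : ∀ t, ControlledByPast x t) :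
    Bornology.IsBounded (Set.range x) := by
  refine Bornology.forall_isBounded_image_eval_iff.1 fun t => ?_
  obtain ⟨C, hC⟩ := exists_norm_le h t
  refine isBounded_iff_forall_norm_le.2 ⟨C, ?_⟩
  rintro _ ⟨_, ⟨n, rfl⟩, rfl⟩
  exact hC n

end ControlledByPast

lemma not_controlledByPast_iff {x : κ → ι → E} {t : ι} :
    ¬ ControlledByPast x t ↔ ∀ k : ℕ, ∃ n, ((k : ℝ) + 1) * pastSize (x n) t < ‖x n t‖ := by
  refine ⟨fun h k => ?_, ?_⟩
  · by_contra! hk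
    exact h ⟨_, hk⟩
  · rintro h ⟨K, hK⟩
    obtain ⟨k, hk⟩ := exists_nat_ge K
    obtain ⟨n, hn⟩ := h k
    refine hn.not_ge ((hK n).trans ?_)
    have := one_le_pastSize (x n) t
    gcongr
    linarith

namespace OutgrowsPast

variable {x : ℕ → ι → E} {t : ι}

lemma natCast_add_one_lt_norm (h : OutgrowsPast x t) (k : ℕ) : (k : ℝ) + 1 < ‖x k t‖ :=
  (le_mul_of_one_le_right (by positivity) (one_le_pastSize _ _)).trans_lt (h k)

lemma one_le_norm (h : OutgrowsPast x t) (k : ℕ) : 1 ≤ ‖x k t‖ :=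
  (le_add_of_nonneg_left k.cast_nonneg).trans (h.natCast_add_one_lt_norm k).le

lemma norm_pos (h : OutgrowsPast x t) (k : ℕ) : 0 < ‖x k t‖ :=
  zero_lt_one.trans_le (h.one_le_norm k)

lemma tendsto_norm_atTop (h : OutgrowsPast x t) : Tendsto (fun k => ‖x k t‖) atTop atTop :=
  tendsto_atTop_mono (fun k => (lt_add_one _).le.trans (h.natCast_add_one_lt_norm k).le)
    tendsto_natCast_atTop_atTop

variable [NormedSpace ℝ E]

lemma norm_normalized_eq_one (h : OutgrowsPast x t) (k : ℕ) : ‖(‖x k t‖⁻¹ • x k) t‖ = 1 := by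
  rw [Pi.smul_apply, norm_smul, norm_inv, norm_norm, inv_mul_cancel₀ (h.norm_pos k).ne']

lemma norm_normalized_le_one_div (h : OutgrowsPast x t) {s : ι} (hs : s < t) (k : ℕ) :
    ‖(‖x k t‖⁻¹ • x k) s‖ ≤ 1 / ((k : ℝ) + 1) := by
  rw [Pi.smul_apply, norm_smul, norm_inv, norm_norm, inv_mul_le_iff₀ (h.norm_pos k), mul_one_div,
    le_div_iff₀' (by positivity)]
  exact (mul_le_mul_of_nonneg_left (norm_le_pastSize (x k) hs) (by positivity)).trans (h k).le

lemma tendsto_normalized_zero (h : OutgrowsPast x t) {s : ι} (hs : s < t) :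
    Tendsto (fun k => (‖x k t‖⁻¹ • x k) s) atTop (𝓝 0) :=
  squeeze_zero_norm (h.norm_normalized_le_one_div hs) tendsto_one_div_add_atTop_nhds_zero_nat

lemma isBounded_range_normalized {ι : Type*} [LinearOrder ι] [WellFoundedLT ι]
    [LocallyFiniteOrderBot ι] {x : ℕ → ι → E} {t : ι} (h : OutgrowsPast x t)
    (hfuture : ∀ s > t, ControlledByPast x s) :
    Bornology.IsBounded (Set.range fun k => ‖x k t‖⁻¹ • x k) := by
  refine ControlledByPast.isBounded_range fun s => ?_
  obtain hs | rfl | hs := lt_trichotomy s t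
  · refine .of_norm_le (C := 1) fun k => (h.norm_normalized_le_one_div hs k).trans ?_
    exact (div_le_one (by positivity)).2 (le_add_of_nonneg_left k.cast_nonneg)
  · exact .of_norm_le fun k => (h.norm_normalized_eq_one k).le
  · refine (hfuture s hs).smul fun k => ?_
    rw [norm_inv, norm_norm]
    exact inv_le_one_of_one_le₀ (h.one_le_norm k)

end OutgrowsPast

end Growth

namespace AdaptedStrat

variable {Ω : Type*} {T d : ℕ} {ℱ : Fin T → MeasurableSpace Ω}

lemma measurable_norm_apply (hℱ : Monotone ℱ) {ϑ : Ω → Fin T → Fin d → ℝ} (hϑ : AdaptedStrat ℱ ϑ)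
    {r t : Fin T} (hr : r ≤ t) : Measurable[ℱ t] fun ω => ‖ϑ ω r‖ :=
  measurable_norm.comp ((hϑ r).mono (hℱ hr) le_rfl)

lemma measurable_pastSize (hℱ : Monotone ℱ) {ϑ : Ω → Fin T → Fin d → ℝ} (hϑ : AdaptedStrat ℱ ϑ)
    (t : Fin T) : Measurable[ℱ t] fun ω => pastSize (ϑ ω) t :=
  (Finset.measurable_fun_sum _ fun _ hr =>
    hϑ.measurable_norm_apply hℱ (Finset.mem_Iio.1 hr).le).const_add 1

variable {ϑ : ℕ → Ω → Fin T → Fin d → ℝ}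

lemma measurableSet_mul_pastSize_lt_norm (hℱ : Monotone ℱ) (hϑ : ∀ n, AdaptedStrat ℱ (ϑ n))
    (t : Fin T) (c : ℝ) (n : ℕ) :
    MeasurableSet[ℱ t] {ω | c * pastSize (ϑ n ω) t < ‖ϑ n ω t‖} :=
  measurableSet_lt (mδ := ℱ t) (((hϑ n).measurable_pastSize hℱ t).const_mul c)
    ((hϑ n).measurable_norm_apply hℱ le_rfl)

lemma measurableSet_not_controlledByPast (hℱ : Monotone ℱ) (hϑ : ∀ n, AdaptedStrat ℱ (ϑ n))
    (t : Fin T) : MeasurableSet[ℱ t] {ω | ¬ ControlledByPast (ϑ · ω) t} := by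
  simp only [not_controlledByPast_iff, Set.ofPred_forall, Set.ofPred_exists]
  exact .iInter fun k => .iUnion fun n => measurableSet_mul_pastSize_lt_norm hℱ hϑ t _ n

lemma exists_measurable_outgrowsPast (hℱ : Monotone ℱ) (hϑ : ∀ n, AdaptedStrat ℱ (ϑ n))
    (t : Fin T) :
    ∃ τ : ℕ → Ω → ℕ, (∀ k, Measurable[ℱ t] (τ k)) ∧
      ∀ ω, ¬ ControlledByPast (ϑ · ω) t → OutgrowsPast (fun k => ϑ (τ k ω) ω) t := by
  choose τ hτ hτspec using fun k : ℕ => exists_measurable_nat_spec (m := ℱ t)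
    (measurableSet_mul_pastSize_lt_norm hℱ hϑ t ((k : ℝ) + 1))
  exact ⟨τ, hτ, fun ω hω k => hτspec k ω (not_controlledByPast_iff.1 hω k)⟩

lemma normalize_randomIndex (hℱ : Monotone ℱ) (hϑ : ∀ n, AdaptedStrat ℱ (ϑ n)) {t : Fin T}
    {τ : Ω → ℕ} (hτ : Measurable[ℱ t] τ) :
    AdaptedStrat (fun s => ℱ (s ⊔ t)) fun ω => ‖ϑ (τ ω) ω t‖⁻¹ • ϑ (τ ω) ω := by
  have hselect : ∀ {r s : Fin T}, r ≤ s ⊔ t → Measurable[ℱ (s ⊔ t)] fun ω => ϑ (τ ω) ω r :=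
    fun {r s} hr => measurable_eval_randomIndex (m := ℱ (s ⊔ t)) (y := fun n ω => ϑ n ω r)
      (fun n => (hϑ n r).mono (hℱ hr) le_rfl) (hτ.mono (hℱ le_sup_right) le_rfl)
  intro s
  have hinv : Measurable[ℱ (s ⊔ t)] fun ω => ‖ϑ (τ ω) ω t‖⁻¹ :=
    (measurable_norm.comp (hselect le_sup_right)).inv
  exact hinv.smul (hselect le_sup_left)

end AdaptedStrat

section RecessionModel

variable {Ω : Type*} {T d : ℕ} {V : Ω → (Fin T → Fin d → ℝ) → EReal} {ω : Ω} {c : ℝ}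

lemma recessionModel_nonneg_of_tendsto {α : Type*} {l : Filter α} [l.NeBot]
    {x : α → Fin T → Fin d → ℝ} {r : α → ℝ} {z : Fin T → Fin d → ℝ} (hr : Tendsto r l atTop)
    (hx : ∀ k, (c : EReal) ≤ V ω (x k)) (hz : Tendsto (fun k => (r k)⁻¹ • x k) l (𝓝 z)) :
    0 ≤ recessionModel V ω z := by
  refine le_iInf fun a => ?_
  have hlim : Tendsto (fun k => (((r k)⁻¹ * c : ℝ) : EReal)) l (𝓝 0) := by
    have hreal : Tendsto (fun k => (r k)⁻¹ * c) l (𝓝 0) := by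
      simpa only [zero_mul, Pi.inv_apply] using hr.inv_tendsto_atTop.mul_const c
    exact EReal.tendsto_coe.2 hreal
  refine le_of_tendsto hlim ?_
  filter_upwards [hr.eventually_gt_atTop a.1,
    hz.eventually (Metric.ball_mem_nhds z (one_div_pos.2 a.2))] with k hak hdist
  have hrk : 0 < r k := a.2.trans hak
  calc (((r k)⁻¹ * c : ℝ) : EReal) = (((r k)⁻¹ : ℝ) : EReal) * c := EReal.coe_mul _ _
    _ ≤ (((r k)⁻¹ : ℝ) : EReal) * V ω (r k • ((r k)⁻¹ • x k)) := by
      rw [smul_inv_smul₀ hrk.ne']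
      exact mul_le_mul_of_nonneg_left (hx k) (EReal.coe_nonneg.2 (inv_pos.2 hrk).le)
    _ ≤ _ := le_iSup₂_of_le (⟨r k, hak⟩ : {δ : ℝ // a.1 < δ})
      (⟨(r k)⁻¹ • x k, by rwa [← dist_eq_norm]⟩ : {x // ‖x - z‖ < 1 / a.1}) le_rfl

lemma recessionModel_zero_nonneg_s12 {x : Fin T → Fin d → ℝ} (hx : (c : EReal) ≤ V ω x) :
    0 ≤ recessionModel V ω 0 := by
  refine recessionModel_nonneg_of_tendsto (x := fun _ => x) tendsto_natCast_atTop_atTop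
    (fun _ => hx) ?_
  simpa only [zero_smul] using (tendsto_inv_atTop_nhds_zero_nat (𝕜 := ℝ)).smul_const x

end RecessionModel

/-- The set `𝒞_f` of superhedgeable claims above `f`. -/
def superhedgeableClaims {Ω : Type*} [MeasurableSpace Ω] {T d : ℕ} (P : Measure Ω)
    (ℱ : Fin T → MeasurableSpace Ω) (V : Ω → (Fin T → Fin d → ℝ) → EReal) (f : Ω → ℝ) :
    Set (Ω → ℝ) :=
  {g | Measurable g ∧
    ∃ ϑ, AdaptedStrat ℱ ϑ ∧ ∀ᵐ ω ∂P, f ω ≤ g ω ∧ (g ω : EReal) ≤ V ω (ϑ ω)}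

lemma exists_coe_upperBound_of_upperSemicontinuous {E : Type*} [PseudoMetricSpace E]
    [ProperSpace E] {h : E → EReal} (husc : UpperSemicontinuous h) (htop : ∀ x, h x ≠ ⊤)
    {s : Set E} (hs : Bornology.IsBounded s) : ∃ C : ℝ, ∀ x ∈ s, h x ≤ C := by
  obtain rfl | hne := s.eq_empty_or_nonempty
  · exact ⟨0, by simp⟩
  obtain ⟨a, -, ha⟩ := (husc.upperSemicontinuousOn (closure s)).exists_isMaxOn hne.closure
    hs.isCompact_closure
  exact ⟨(h a).toReal, fun x hx => (ha (subset_closure hx)).trans (EReal.le_coe_toReal (htop a))⟩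

namespace NAcond

variable {Ω : Type*} {mΩ : MeasurableSpace Ω} {P : Measure Ω} {T d : ℕ}
  {ℱ : Fin T → MeasurableSpace Ω} {V : Ω → (Fin T → Fin d → ℝ) → EReal}

/-- An arbitrage on `A ∈ ℱ t` that trades only from `t` on has to be adapted only from `t` on. -/
lemma ae_eq_zero_of_forall_mem (hNA : NAcond P ℱ V) (hℱ : Monotone ℱ)
    (h0 : ∀ᵐ ω ∂P, 0 ≤ recessionModel V ω 0) {t : Fin T} {A : Set Ω} (hA : MeasurableSet[ℱ t] A)
    {z : Ω → Fin T → Fin d → ℝ} (hz : AdaptedStrat (fun s => ℱ (s ⊔ t)) z)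
    (hzA : ∀ᵐ ω ∂P, ω ∈ A → 0 ≤ recessionModel V ω (z ω) ∧ ∀ s < t, z ω s = 0) :
    ∀ᵐ ω ∂P, ω ∈ A → z ω = 0 := by
  classical
  let ζ : Ω → Fin T → Fin d → ℝ := fun ω s => if t ≤ s then A.indicator (z · s) ω else 0
  have hζ : AdaptedStrat ℱ ζ := by
    intro s
    by_cases hs : t ≤ s
    · have hzs : Measurable[ℱ s] (z · s) := by
        have hzs := hz s
        beta_reduce at hzs
        rwa [sup_eq_left.2 hs] at hzs
      simpa only [ζ, if_pos hs] using hzs.indicator (hℱ hs A hA)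
    · simpa only [ζ, if_neg hs] using measurable_const
  have hζ_notMem : ∀ ω ∉ A, ζ ω = 0 := fun ω hω => by
    ext s : 1
    simp [ζ, hω]
  have hζ_mem : ∀ ω ∈ A, (∀ s < t, z ω s = 0) → ζ ω = z ω := fun ω hω hpast => by
    ext s : 1
    by_cases hs : t ≤ s
    · simp [ζ, hs, hω]
    · simp [ζ, hs, hpast s (not_le.1 hs)]
  have hrec : ∀ᵐ ω ∂P, 0 ≤ recessionModel V ω (ζ ω) := by
    filter_upwards [h0, hzA] with ω h0ω hω
    by_cases hωA : ω ∈ A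
    · rw [hζ_mem ω hωA (hω hωA).2]
      exact (hω hωA).1
    · rwa [hζ_notMem ω hωA]
  filter_upwards [hNA ζ hζ hrec, hzA] with ω hζω hω hωA
  rw [← hζ_mem ω hωA (hω hωA).2, hζω]

variable {f : Ω → ℝ} {ϑ : ℕ → Ω → Fin T → Fin d → ℝ}

lemma ae_controlledByPast (hNA : NAcond P ℱ V) (hℱ : Monotone ℱ)
    (hϑ : ∀ n, AdaptedStrat ℱ (ϑ n)) (hf : ∀ᵐ ω ∂P, ∀ n, (f ω : EReal) ≤ V ω (ϑ n ω))
    (t : Fin T) : ∀ᵐ ω ∂P, ControlledByPast (ϑ · ω) t := by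
  induction t using WellFoundedGT.induction with
  | ind t ih =>
    obtain ⟨τ, hτ, hgrow⟩ := AdaptedStrat.exists_measurable_outgrowsPast hℱ hϑ t
    have hℱt : Monotone fun s => ℱ (s ⊔ t) := fun _ _ h => hℱ (sup_le_sup_right h t)
    obtain ⟨σ, z, hσ, hz, hlim⟩ := AdaptedStrat.exists_subseq_tendsto hℱt fun k =>
      AdaptedStrat.normalize_randomIndex hℱ hϑ (hτ k)
    have hfuture : ∀ᵐ ω ∂P, ∀ s > t, ControlledByPast (ϑ · ω) s :=
      ae_all_iff.2 fun s => eventually_imp_distrib_left.2 (ih s)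
    have hconv : ∀ᵐ ω ∂P, ¬ ControlledByPast (ϑ · ω) t →
        Tendsto (fun k => ‖ϑ (τ (σ k ω) ω) ω t‖⁻¹ • ϑ (τ (σ k ω) ω) ω) atTop (𝓝 (z ω)) := by
      filter_upwards [hfuture] with ω hω hωt
      exact hlim ω ((hgrow ω hωt).isBounded_range_normalized fun s hs => (hω s hs).comp (τ · ω))
    have hdirection : ∀ᵐ ω ∂P, ¬ ControlledByPast (ϑ · ω) t →
        0 ≤ recessionModel V ω (z ω) ∧ ∀ s < t, z ω s = 0 := by
      filter_upwards [hf, hconv] with ω hfω hω hωt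
      have hout := hgrow ω hωt
      exact ⟨recessionModel_nonneg_of_tendsto (hout.tendsto_norm_atTop.comp (hσ ω))
        (fun k => hfω (τ (σ k ω) ω)) (hω hωt), fun s hs =>
        tendsto_nhds_unique (tendsto_pi_nhds.1 (hω hωt) s)
          ((hout.tendsto_normalized_zero hs).comp (hσ ω))⟩
    have hzero := hNA.ae_eq_zero_of_forall_mem hℱ
      (hf.mono fun ω hω => recessionModel_zero_nonneg_s12 (hω 0))
      (AdaptedStrat.measurableSet_not_controlledByPast hℱ hϑ t) hz hdirection
    filter_upwards [hconv, hzero] with ω hω hzω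
    by_contra hωt
    have hone : Tendsto (fun _ : ℕ => (1 : ℝ)) atTop (𝓝 ‖z ω t‖) :=
      (tendsto_pi_nhds.1 (hω hωt) t).norm.congr fun k =>
        (hgrow ω hωt).norm_normalized_eq_one (σ k ω)
    rw [hzω hωt, Pi.zero_apply, norm_zero] at hone
    exact one_ne_zero (tendsto_nhds_unique tendsto_const_nhds hone)

lemma ae_isBounded_range (hNA : NAcond P ℱ V) (hℱ : Monotone ℱ)
    (hϑ : ∀ n, AdaptedStrat ℱ (ϑ n)) (hf : ∀ᵐ ω ∂P, ∀ n, (f ω : EReal) ≤ V ω (ϑ n ω)) :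
    ∀ᵐ ω ∂P, Bornology.IsBounded (Set.range (ϑ · ω)) := by
  filter_upwards [ae_all_iff.2 (hNA.ae_controlledByPast hℱ hϑ hf)] with ω hω
    using ControlledByPast.isBounded_range hω

lemma ae_bddAbove_range_superhedgeableClaims (hNA : NAcond P ℱ V) (hℱ : Monotone ℱ)
    (hVnotTop : ∀ᵐ ω ∂P, ∀ x, V ω x ≠ ⊤) (hVusc : ∀ᵐ ω ∂P, UpperSemicontinuous (V ω))
    {g : ℕ → Ω → ℝ} (hg : ∀ n, g n ∈ superhedgeableClaims P ℱ V f) :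
    ∀ᵐ ω ∂P, BddAbove (Set.range (g · ω)) := by
  choose _ ϑ hϑ hgϑ using hg
  have hgϑ' := ae_all_iff.2 hgϑ
  have hfϑ : ∀ᵐ ω ∂P, ∀ n, (f ω : EReal) ≤ V ω (ϑ n ω) := by
    filter_upwards [hgϑ'] with ω hω n
    exact (EReal.coe_le_coe (hω n).1).trans (hω n).2
  filter_upwards [hgϑ', hNA.ae_isBounded_range hℱ hϑ hfϑ, hVnotTop, hVusc]
    with ω hω hbdd htop husc
  obtain ⟨C, hC⟩ := exists_coe_upperBound_of_upperSemicontinuous husc htop hbdd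
  refine ⟨C, Set.forall_mem_range.2 fun n => ?_⟩
  exact EReal.coe_le_coe_iff.1 ((hω n).2.trans (hC _ (Set.mem_range_self n)))

end NAcond

theorem stmt12_general {Ω : Type*} {mΩ : MeasurableSpace Ω} (P : Measure Ω) [SFinite P]
    {T d : ℕ} (ℱ : Fin T → MeasurableSpace Ω) (hℱmono : Monotone ℱ)
    (V : Ω → (Fin T → Fin d → ℝ) → EReal)
    (hVnotTop : ∀ᵐ ω ∂P, ∀ x, V ω x ≠ ⊤)
    (hVusc : ∀ᵐ ω ∂P, UpperSemicontinuous (V ω))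
    (hNA : NAcond P ℱ V) (f : Ω → ℝ) :
    ∃ Mf : Ω → ℝ, Measurable Mf ∧
      ∀ g : Ω → ℝ, Measurable g →
        (∃ ϑ, AdaptedStrat ℱ ϑ ∧
          ∀ᵐ ω ∂P, f ω ≤ g ω ∧ (g ω : EReal) ≤ V ω (ϑ ω)) →
        ∀ᵐ ω ∂P, g ω ≤ Mf ω := by
  obtain ⟨M, hM, hle⟩ := exists_measurable_ae_upperBound P
    (S := superhedgeableClaims P ℱ V f) (fun _ hg => hg.1)
    fun _ hu => hNA.ae_bddAbove_range_superhedgeableClaims hℱmono hVnotTop hVusc hu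
  exact ⟨M, hM, fun g hg hϑ => hle g ⟨hg, hϑ⟩⟩

/-- for a normal integrand market model satisfying NA and a random
variable `f`, there is a finite random variable `M_f` dominating (a.s.) every
superhedgeable claim in `𝒞_f`. -/
theorem stmt12 {Ω : Type*} {mΩ : MeasurableSpace Ω} (P : Measure Ω) [IsProbabilityMeasure P]
    (T d : ℕ) (hT : 1 ≤ T) (hd : 1 ≤ d)
    (ℱ : Fin T → MeasurableSpace Ω) (hℱmono : Monotone ℱ) (hℱle : ∀ t, ℱ t ≤ mΩ)
    -- V is a normal integrand market model:
    (V : Ω → (Fin T → Fin d → ℝ) → EReal)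
    (hVjm : Measurable (Function.uncurry V))
    (hV0 : ∀ᵐ ω ∂P, V ω 0 = 0)
    (hVnotTop : ∀ ω x, V ω x ≠ ⊤)
    (hVusc : ∀ᵐ ω ∂P, UpperSemicontinuous (V ω))
    (hVhypo : HypoClosedMeas (mΩ := mΩ) V)
    -- satisfying the no-arbitrage condition:
    (hNA : NAcond P ℱ V)
    (f : Ω → ℝ) (hf : Measurable f) :
    ∃ Mf : Ω → ℝ, Measurable Mf ∧
      ∀ g : Ω → ℝ, Measurable g →
        (∃ ϑ, AdaptedStrat ℱ ϑ ∧
          ∀ᵐ ω ∂P, f ω ≤ g ω ∧ (g ω : EReal) ≤ V ω (ϑ ω)) →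
        ∀ᵐ ω ∂P, g ω ≤ Mf ω := by
  exact stmt12_general P ℱ hℱmono V (Eventually.of_forall hVnotTop) hVusc hNA f

end
end

section
/- Let K : Ω ⇉ ℝ^n be a measurable correspondence with closed convex cone values and polar K°. Suppose V : Ω × ℝ^{dT} → ℝ^n ∪ {−∞} is a map such that for every measurable selection Z of the relative interior of K°, the scalarization V_Z(ω,x) := ⟨Z(ω), V(ω,x)⟩ (with ⟨Z,−∞⟩ := −∞) is a normal integrand. Then the hypograph correspondence ω ↦ { (x,y) ∈ ℝ^{dT} × ℝ^n : V(ω,x) − y ∈ K(ω) } is closed-valued and measurable. -/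
open MeasureTheory Filter Topology

noncomputable section

/-- A measurable correspondence: `{ω : C(ω) ∩ B ≠ ∅} ∈ 𝓕` for every open ball `B`. -/
def MeasCorr {Ω : Type*} [MeasurableSpace Ω] {E : Type*} [PseudoMetricSpace E]
    (C : Ω → Set E) : Prop :=
  ∀ (c : E) (r : ℝ), MeasurableSet {ω | (Metric.ball c r ∩ C ω).Nonempty}

/-- The (positive) polar cone of a set, w.r.t. the standard scalar product on `ℝ^n`. -/
def polarCone {n : ℕ} (K : Set (Fin n → ℝ)) : Set (Fin n → ℝ) :=
  {y | ∀ x ∈ K, 0 ≤ ∑ i, x i * y i}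

/-- The scalarization `V_Z(ω,x) = ⟨Z(ω), V(ω,x)⟩`, with the convention
`⟨Z, −∞⟩ = −∞`. -/
def scalarize {Ω : Type*} {T d n : ℕ} (Z : Ω → Fin n → ℝ)
    (V : Ω → (Fin T → Fin d → ℝ) → WithBot (Fin n → ℝ)) (ω : Ω)
    (x : Fin T → Fin d → ℝ) : EReal :=
  WithBot.recBotCoe (⊥ : EReal) (fun v => ((∑ i, Z ω i * v i : ℝ) : EReal)) (V ω x)

/-!
Every closed convex cone `K ω` is the dual of its polar, so it is cut out by the inequalities
`0 ≤ ⟨w, Z k ω⟩` for any Castaing representation `Z` of the polar. The `Z k` can be taken in the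
relative interior of the polar: if `X` is a Castaing representation, some `X k ω` is a relative
interior point, hence so is a convergent series `Y ω = ∑ t k ω • X k ω` with positive coefficients,
and so are the points `X k ω + ε • Y ω`. Therefore the hypograph of `V ω` is the countable
intersection of the preimages of the hypographs of the scalarizations `V_{Z k}` under the
Carathéodory maps `(x, y) ↦ (x, ⟨Z k ω, y⟩)`. Measurability survives this intersection by
compactness: a compact set meets it iff, for every `m` and every finite family of the intersected
sets, some point of a fixed countable dense subset is mapped `1 / (m + 1)`-close to each of them.
-/

section MeasurableCorrespondence

variable {Ω : Type*} [MeasurableSpace Ω]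

/-- A Castaing representation of a correspondence `C`: countably many measurable selections that
are dense in every value of `C`. -/
structure IsCastaingRepr {E : Type*} [TopologicalSpace E] [MeasurableSpace E] (C : Ω → Set E)
    (Z : ℕ → Ω → E) : Prop where
  measurable : ∀ k, Measurable (Z k)
  mem : ∀ k ω, Z k ω ∈ C ω
  subset_closure : ∀ ω, C ω ⊆ closure (Set.range fun k => Z k ω)

theorem IsCastaingRepr.subset_of_isClosed {E : Type*} [TopologicalSpace E] [MeasurableSpace E]
    {C : Ω → Set E} {Z : ℕ → Ω → E} (hZ : IsCastaingRepr C Z) {ω : Ω} {S : Set E}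
    (hS : IsClosed S) (h : ∀ k, Z k ω ∈ S) : C ω ⊆ S :=
  (hZ.subset_closure ω).trans (closure_minimal (Set.range_subset_iff.2 h) hS)

theorem MeasCorr.measurable_infEDist_const {E : Type*} [PseudoMetricSpace E] {C : Ω → Set E}
    (hC : MeasCorr C) (a : E) : Measurable fun ω => Metric.infEDist a (C ω) := by
  have hlt : ∀ r : ℝ, MeasurableSet {ω | Metric.infEDist a (C ω) < ENNReal.ofReal r} := by
    intro r
    convert hC a r using 3 with ω
    rw [← Metric.mem_thickening_iff_infEDist_lt, Metric.mem_thickening_iff]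
    simp only [Set.Nonempty, Set.mem_inter_iff, Metric.mem_ball', and_comm]
  refine measurable_of_Iio fun b => ?_
  have : (fun ω => Metric.infEDist a (C ω)) ⁻¹' Set.Iio b =
      ⋃ (q : ℚ) (_ : ENNReal.ofReal q < b), {ω | Metric.infEDist a (C ω) < ENNReal.ofReal q} := by
    ext ω
    simp only [Set.mem_preimage, Set.mem_Iio, Set.mem_iUnion, exists_prop]
    refine ⟨fun h => ?_, fun ⟨q, hqb, hq⟩ => hq.trans hqb⟩
    obtain ⟨q, -, hq, hqb⟩ := ENNReal.lt_iff_exists_rat_btwn.1 h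
    exact ⟨q, hqb, hq⟩
  rw [this]
  exact .iUnion fun q => .iUnion fun _ => hlt q

section Selection

variable {E : Type*} [MetricSpace E] [SecondCountableTopology E] [MeasurableSpace E]
  [BorelSpace E] {C : Ω → Set E}

theorem MeasCorr.measurable_infEDist (hC : MeasCorr C) {f : Ω → E} (hf : Measurable f) :
    Measurable fun ω => Metric.infEDist (f ω) (C ω) :=
  (measurable_uncurry_of_continuous_of_measurable
    (u := fun (x : E) ω => Metric.infEDist x (C ω)) (fun _ => Metric.continuous_infEDist)
    hC.measurable_infEDist_const).comp (hf.prodMk measurable_id)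

theorem MeasCorr.measurable_infDist (hC : MeasCorr C) {f : Ω → E} (hf : Measurable f) :
    Measurable fun ω => Metric.infDist (f ω) (C ω) :=
  (hC.measurable_infEDist hf).ennreal_toReal

theorem MeasCorr.exists_measurable_infDist_lt (hC : MeasCorr C) (hne : ∀ ω, (C ω).Nonempty)
    {f : Ω → E} (hf : Measurable f) {r ε : Ω → ℝ} (hr : Measurable r) (hε : Measurable ε)
    (hfr : ∀ ω, Metric.infDist (f ω) (C ω) < r ω) (hε₀ : ∀ ω, 0 < ε ω) :
    ∃ g : Ω → E, Measurable g ∧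
      ∀ ω, Metric.infDist (g ω) (C ω) < ε ω ∧ dist (f ω) (g ω) < r ω := by
  classical
  rcases isEmpty_or_nonempty Ω with _ | ⟨⟨ω₀⟩⟩
  · exact ⟨f, hf, isEmptyElim⟩
  have : Nonempty E := ⟨f ω₀⟩
  let u := TopologicalSpace.denseSeq E
  have hex : ∀ ω, ∃ k, Metric.infDist (u k) (C ω) < ε ω ∧ dist (f ω) (u k) < r ω := by
    intro ω
    obtain ⟨y, hyC, hfy⟩ := (Metric.infDist_lt_iff (hne ω)).1 (hfr ω)
    obtain ⟨k, hk⟩ := (TopologicalSpace.denseRange_denseSeq E).exists_dist_lt y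
      (lt_min (hε₀ ω) (sub_pos.2 hfy))
    obtain ⟨hkε, hkr⟩ := lt_min_iff.1 hk
    refine ⟨k, (Metric.infDist_lt_iff (hne ω)).2 ⟨y, hyC, by rwa [dist_comm]⟩, ?_⟩
    linarith [dist_triangle (f ω) y (u k)]
  refine ⟨fun ω => u (Nat.find (hex ω)), ?_, fun ω => Nat.find_spec (hex ω)⟩
  exact Measurable.find (f := fun k _ => u k)
    (p := fun k ω => Metric.infDist (u k) (C ω) < ε ω ∧ dist (f ω) (u k) < r ω)
    (fun _ => measurable_const)
    (fun k => (measurableSet_lt (hC.measurable_infDist measurable_const) hε).inter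
      (measurableSet_lt (hf.dist measurable_const) hr)) hex

variable [CompleteSpace E]

/-- The argument of Kuratowski and Ryll-Nardzewski: the selection is the limit of approximations
`u m` within `r / 2 ^ m` of `C`. -/
theorem MeasCorr.exists_measurable_selection_dist_le (hC : MeasCorr C)
    (hcl : ∀ ω, IsClosed (C ω)) (hne : ∀ ω, (C ω).Nonempty) {f : Ω → E} (hf : Measurable f)
    {r : Ω → ℝ} (hr : Measurable r) (hfr : ∀ ω, Metric.infDist (f ω) (C ω) < r ω) :
    ∃ p : Ω → E, Measurable p ∧ ∀ ω, p ω ∈ C ω ∧ dist (f ω) (p ω) ≤ 2 * r ω := by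
  have hr₀ : ∀ ω, 0 < r ω := fun ω => Metric.infDist_nonneg.trans_lt (hfr ω)
  let Approx (m : ℕ) := {g : Ω → E // Measurable g ∧ ∀ ω, Metric.infDist (g ω) (C ω) < r ω / 2 ^ m}
  have refine_approx : ∀ m (g : Approx m), ∃ g' : Approx (m + 1),
      ∀ ω, dist (g.1 ω) (g'.1 ω) < r ω / 2 ^ m := by
    rintro m ⟨g, hg, hgr⟩
    obtain ⟨g', hg', h⟩ := hC.exists_measurable_infDist_lt hne hg (hr.div_const (2 ^ m))
      (hr.div_const (2 ^ (m + 1))) hgr fun ω => div_pos (hr₀ ω) (by positivity)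
    exact ⟨⟨g', hg', fun ω => (h ω).1⟩, fun ω => (h ω).2⟩
  choose next hnext using refine_approx
  let u : ∀ m, Approx m := fun m => Nat.rec ⟨f, hf, by simpa using hfr⟩ next m
  have hdist : ∀ ω m, dist ((u m).1 ω) ((u (m + 1)).1 ω) ≤ 2 * r ω / 2 / 2 ^ m := fun ω m => by
    simpa using (hnext m (u m) ω).le
  choose p hp using fun ω => cauchySeq_tendsto_of_complete (cauchySeq_of_le_geometric_two (hdist ω))
  refine ⟨p, measurable_of_tendsto_metrizable (fun m => (u m).2.1) (tendsto_pi_nhds.2 hp),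
    fun ω => ⟨?_, dist_le_of_le_geometric_two_of_tendsto₀ (hdist ω) (hp ω)⟩⟩
  have hlim : Tendsto (fun m => Metric.infDist ((u m).1 ω) (C ω)) atTop (𝓝 0) :=
    squeeze_zero (fun _ => Metric.infDist_nonneg) (fun m => ((u m).2.2 ω).le)
      (tendsto_const_nhds.div_atTop (tendsto_pow_atTop_atTop_of_one_lt one_lt_two))
  exact ((hcl ω).mem_iff_infDist_zero (hne ω)).2
    (tendsto_nhds_unique ((Metric.continuous_infDist_pt _).tendsto _ |>.comp (hp ω)) hlim)

theorem MeasCorr.exists_isCastaingRepr (hC : MeasCorr C) (hcl : ∀ ω, IsClosed (C ω))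
    (hne : ∀ ω, (C ω).Nonempty) : ∃ Z, IsCastaingRepr C Z := by
  rcases isEmpty_or_nonempty Ω with _ | ⟨⟨ω₀⟩⟩
  · exact ⟨fun _ => isEmptyElim, fun _ => measurable_of_empty _, fun _ => isEmptyElim,
      isEmptyElim⟩
  have : Nonempty E := (hne ω₀).to_type
  let u := TopologicalSpace.denseSeq E
  let δ : ℕ → ℝ := fun m => 1 / (m + 1)
  have hδ : ∀ m, 0 < δ m := fun m => Nat.one_div_pos_of_nat
  choose p hpm hp using fun k m => hC.exists_measurable_selection_dist_le hcl hne
    (f := fun _ => u k) measurable_const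
    ((hC.measurable_infDist measurable_const).add_const (δ m)) fun _ => lt_add_of_pos_right _ (hδ m)
  refine ⟨fun k => p k.unpair.1 k.unpair.2, fun _ => hpm _ _, fun _ ω => (hp _ _ ω).1,
    fun ω z hz => Metric.mem_closure_range_iff.2 fun ε hε => ?_⟩
  obtain ⟨m, hm⟩ := exists_nat_one_div_lt (show 0 < ε / 5 by positivity)
  obtain ⟨k, hk⟩ := (TopologicalSpace.denseRange_denseSeq E).exists_dist_lt z
    (show 0 < ε / 5 by positivity)
  refine ⟨Nat.pair k m, ?_⟩
  have hpk : dist (u k) (p k m ω) ≤ 2 * (Metric.infDist (u k) (C ω) + δ m) := (hp k m ω).2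
  have huz : Metric.infDist (u k) (C ω) ≤ dist z (u k) := by
    rw [dist_comm]
    exact Metric.infDist_le_dist_of_mem hz
  rw [Nat.unpair_pair]
  linarith [dist_triangle z (u k) (p k m ω)]

end Selection

theorem measCorr_of_isCompact {E : Type*} [PseudoMetricSpace E] [ProperSpace E] {C : Ω → Set E}
    (h : ∀ B : Set E, IsCompact B → MeasurableSet {ω | (B ∩ C ω).Nonempty}) : MeasCorr C := by
  intro c r
  obtain ⟨B, hBcl, hBsub, hB, -⟩ := (Metric.isOpen_ball (x := c) (ε := r)).exists_iUnion_isClosed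
  have : {ω | (Metric.ball c r ∩ C ω).Nonempty} = ⋃ m, {ω | (B m ∩ C ω).Nonempty} := by
    ext ω
    rw [← hB]
    simp only [Set.iUnion_inter, Set.nonempty_iUnion, Set.mem_ofPred_eq, Set.mem_iUnion]
  rw [this]
  exact .iUnion fun m => h _ <|
    Metric.isCompact_of_isClosed_isBounded (hBcl m) (Metric.isBounded_ball.subset (hBsub m))

theorem mem_of_isClosed_of_forall_mem_cthickening {F : Type*} [PseudoMetricSpace F] {H : Set F}
    (hH : IsClosed H) {x : F} (hx : ∀ m : ℕ, x ∈ Metric.cthickening (1 / (m + 1)) H) : x ∈ H := by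
  rw [← hH.closure_eq, Metric.closure_eq_iInter_cthickening]
  refine Set.mem_iInter₂.2 fun δ hδ => ?_
  obtain ⟨m, hm⟩ := exists_nat_one_div_lt hδ
  exact Metric.cthickening_mono hm.le _ (hx m)

theorem inter_iInter_preimage_nonempty_iff_forall_thickening {ι E F : Type*} [TopologicalSpace E]
    [PseudoMetricSpace F] {B D : Set E} (hB : IsCompact B) (hBcl : IsClosed B) (hDB : D ⊆ B)
    (hD : B ⊆ closure D) {φ : ι → E → F} (hφ : ∀ i, Continuous (φ i)) {H : ι → Set F}
    (hH : ∀ i, IsClosed (H i)) :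
    (B ∩ ⋂ i, φ i ⁻¹' H i).Nonempty ↔
      ∀ (s : Finset ι) (m : ℕ), ∃ e ∈ D, ∀ i ∈ s,
        φ i e ∈ Metric.thickening (1 / (m + 1)) (H i) := by
  have hpos : ∀ m : ℕ, (0 : ℝ) < 1 / (m + 1) := fun m => Nat.one_div_pos_of_nat
  constructor
  · rintro ⟨z, hzB, hz⟩ s m
    have hopen : IsOpen (⋂ i ∈ s, φ i ⁻¹' Metric.thickening (1 / (m + 1)) (H i)) :=
      isOpen_biInter_finset fun i _ => Metric.isOpen_thickening.preimage (hφ i)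
    obtain ⟨e, he, heD⟩ := mem_closure_iff.1 (hD hzB) _ hopen <| Set.mem_iInter₂.2 fun i _ =>
      Metric.self_subset_thickening (hpos m) _ (Set.mem_iInter.1 hz i)
    exact ⟨e, heD, fun i hi => Set.mem_iInter₂.1 he i hi⟩
  · intro h
    let A : Finset ι × ℕ → Set E := fun q =>
      B ∩ ⋂ i ∈ q.1, φ i ⁻¹' Metric.cthickening (1 / (q.2 + 1)) (H i)
    have hAcl : ∀ q, IsClosed (A q) := fun q => hBcl.inter <|
      isClosed_biInter fun i _ => Metric.isClosed_cthickening.preimage (hφ i)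
    have hAanti : Antitone A := fun q q' hqq' => Set.inter_subset_inter_right _ <|
      Set.biInter_mono hqq'.1 fun i _ => Set.preimage_mono <|
        Metric.cthickening_mono (Nat.one_div_le_one_div hqq'.2) _
    have hAne : ∀ q, (A q).Nonempty := fun q => by
      obtain ⟨e, heD, he⟩ := h q.1 q.2
      exact ⟨e, hDB heD, Set.mem_iInter₂.2 fun i hi =>
        Metric.thickening_subset_cthickening _ _ (he i hi)⟩
    classical
    have : Nonempty (Finset ι × ℕ) := ⟨∅, 0⟩
    obtain ⟨z, hz⟩ := IsCompact.nonempty_iInter_of_directed_nonempty_isCompact_isClosed A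
      hAanti.directed_ge hAne (fun q => hB.of_isClosed_subset (hAcl q) Set.inter_subset_left) hAcl
    rw [Set.mem_iInter] at hz
    exact ⟨z, (hz (∅, 0)).1, Set.mem_iInter.2 fun i =>
      mem_of_isClosed_of_forall_mem_cthickening (hH i) fun m =>
        Set.mem_iInter₂.1 (hz ({i}, m)).2 i (Finset.mem_singleton_self i)⟩

theorem MeasCorr.iInter_preimage {ι E F : Type*} [Countable ι] [MetricSpace E] [ProperSpace E]
    [MetricSpace F] [SecondCountableTopology F] [MeasurableSpace F] [BorelSpace F]
    {H : ι → Ω → Set F} (hH : ∀ i, MeasCorr (H i)) (hcl : ∀ i ω, IsClosed (H i ω))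
    {φ : ι → Ω → E → F} (hmeas : ∀ i e, Measurable fun ω => φ i ω e)
    (hcont : ∀ i ω, Continuous (φ i ω)) :
    MeasCorr fun ω => ⋂ i, φ i ω ⁻¹' H i ω := by
  refine measCorr_of_isCompact fun B hB => ?_
  obtain ⟨D, hDB, hDc, hD⟩ :=
    (TopologicalSpace.IsSeparable.of_separableSpace B).exists_countable_dense_subset
  have : {ω | (B ∩ ⋂ i, φ i ω ⁻¹' H i ω).Nonempty} = ⋂ (s : Finset ι) (m : ℕ), ⋃ e ∈ D, ⋂ i ∈ s,
      {ω | φ i ω e ∈ Metric.thickening (1 / (m + 1)) (H i ω)} := by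
    ext ω
    simp only [Set.mem_ofPred_eq, Set.mem_iInter, Set.mem_iUnion, exists_prop]
    exact inter_iInter_preimage_nonempty_iff_forall_thickening hB hB.isClosed hDB hD
      (fun i => hcont i ω) fun i => hcl i ω
  rw [this]
  exact .iInter fun s => .iInter fun m => .biUnion hDc fun e _ => Finset.measurableSet_biInter _
    fun i _ => measurableSet_lt ((hH i).measurable_infEDist (hmeas i e)) measurable_const

end MeasurableCorrespondence

section RelativeInterior

variable {E : Type*} [NormedAddCommGroup E] [NormedSpace ℝ E]

theorem mem_intrinsicInterior_iff_exists_dist_lt {C : Set E} {x : E} :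
    x ∈ intrinsicInterior ℝ C ↔
      x ∈ affineSpan ℝ C ∧ ∃ ε > 0, ∀ y ∈ affineSpan ℝ C, dist y x < ε → y ∈ C := by
  rw [mem_intrinsicInterior]
  constructor
  · rintro ⟨x, hx, rfl⟩
    obtain ⟨ε, hε, h⟩ := Metric.mem_nhds_iff.1 (mem_interior_iff_mem_nhds.1 hx)
    exact ⟨x.2, ε, hε, fun y hy hyx =>
      h (show (⟨y, hy⟩ : affineSpan ℝ C) ∈ Metric.ball x ε from hyx)⟩
  · rintro ⟨hx, ε, hε, h⟩
    exact ⟨⟨x, hx⟩, mem_interior_iff_mem_nhds.2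
      (Metric.mem_nhds_iff.2 ⟨ε, hε, fun y hy => h y y.2 hy⟩), rfl⟩

theorem inter_intrinsicInterior_nonempty_of_subset_closure [FiniteDimensional ℝ E] {C D : Set E}
    (hconv : Convex ℝ C) (hne : C.Nonempty) (hDC : D ⊆ C) (hCD : C ⊆ closure D) :
    (D ∩ intrinsicInterior ℝ C).Nonempty := by
  obtain ⟨x, hx⟩ := hne.intrinsicInterior hconv
  obtain ⟨-, ε, hε, hball⟩ := mem_intrinsicInterior_iff_exists_dist_lt.1 hx
  obtain ⟨z, hzD, hxz⟩ := Metric.mem_closure_iff.1 (hCD (intrinsicInterior_subset hx)) (ε / 2)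
    (half_pos hε)
  refine ⟨z, hzD, mem_intrinsicInterior_iff_exists_dist_lt.2
    ⟨subset_affineSpan ℝ C (hDC hzD), ε / 2, half_pos hε, fun y hy hyz => hball y hy ?_⟩⟩
  linarith [dist_triangle_right y x z]

theorem smul_add_mem_intrinsicInterior (C : PointedCone ℝ E) {x c : E}
    (hx : x ∈ intrinsicInterior ℝ (C : Set E)) (hc : c ∈ C) {t : ℝ} (ht : 0 < t) :
    t • x + c ∈ intrinsicInterior ℝ (C : Set E) := by
  obtain ⟨-, ε, hε, hball⟩ := mem_intrinsicInterior_iff_exists_dist_lt.1 hx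
  have smul_add_mem : ∀ y ∈ C, t • y + c ∈ C := fun y hy =>
    C.add_mem (C.smul_mem ht.le hy) hc
  refine mem_intrinsicInterior_iff_exists_dist_lt.2
    ⟨subset_affineSpan ℝ _ (smul_add_mem x (intrinsicInterior_subset hx)), t * ε, mul_pos ht hε,
      fun y hy hyx => ?_⟩
  have hy_eq : t • (t⁻¹ • (y - c)) + c = y := by rw [smul_inv_smul₀ ht.ne', sub_add_cancel]
  have hspan : t⁻¹ • (y - c) ∈ affineSpan ℝ (C : Set E) := by
    simpa using (affineSpan ℝ (C : Set E)).smul_vsub_vadd_mem t⁻¹ hy (subset_affineSpan ℝ _ hc)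
      (subset_affineSpan ℝ _ C.zero_mem)
  rw [← hy_eq] at hyx ⊢
  refine smul_add_mem _ (hball _ hspan ?_)
  rwa [dist_add_right, dist_smul₀, Real.norm_of_nonneg ht.le, mul_lt_mul_iff_right₀ ht] at hyx

theorem tsum_smul_mem_intrinsicInterior (C : ProperCone ℝ E) {x : ℕ → E} (hx : ∀ k, x k ∈ C)
    {t : ℕ → ℝ} (ht : ∀ k, 0 < t k) (hsum : Summable fun k => t k • x k)
    (hri : ∃ k, x k ∈ intrinsicInterior ℝ (C : Set E)) :
    ∑' k, t k • x k ∈ intrinsicInterior ℝ (C : Set E) := by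
  classical
  obtain ⟨j, hj⟩ := hri
  rw [hsum.tsum_eq_add_tsum_ite j]
  refine smul_add_mem_intrinsicInterior C.toPointedCone hj ?_ (ht j)
  refine tsum_mem C.isClosed fun k => ?_
  split_ifs
  · exact C.zero_mem
  · exact C.smul_mem (hx k) (ht k).le

theorem summable_geometric_div_one_add_norm_smul [CompleteSpace E] (x : ℕ → E) :
    Summable fun k => ((1 / 2 : ℝ) ^ k / (1 + ‖x k‖)) • x k := by
  refine .of_norm_bounded summable_geometric_two fun k => ?_
  rw [norm_smul, Real.norm_of_nonneg (by positivity), div_mul_eq_mul_div]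
  exact div_le_of_le_mul₀ (by positivity) (by positivity) (by gcongr; linarith)

variable {Ω : Type*} [MeasurableSpace Ω] [FiniteDimensional ℝ E] [MeasurableSpace E] [BorelSpace E]
  {C : Ω → ProperCone ℝ E} {X : ℕ → Ω → E}

theorem IsCastaingRepr.exists_measurable_mem_intrinsicInterior
    (hX : IsCastaingRepr (fun ω => (C ω : Set E)) X) :
    ∃ Y : Ω → E, Measurable Y ∧ ∀ ω, Y ω ∈ intrinsicInterior ℝ (C ω : Set E) := by
  let t : ℕ → Ω → ℝ := fun k ω => (1 / 2 : ℝ) ^ k / (1 + ‖X k ω‖)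
  have ht : ∀ k ω, 0 < t k ω := fun k ω => by positivity
  have hsum : ∀ ω, Summable fun k => t k ω • X k ω := fun ω =>
    summable_geometric_div_one_add_norm_smul (X · ω)
  refine ⟨fun ω => ∑' k, t k ω • X k ω, ?_, fun ω => ?_⟩
  · have htm : ∀ k, Measurable (t k) := fun k =>
      ((hX.measurable k).norm.const_add 1).const_div _
    exact measurable_of_tendsto_metrizable
      (fun N => Finset.measurable_sum (Finset.range N) fun k _ => (htm k).smul (hX.measurable k))
      (tendsto_pi_nhds.2 fun ω => by simpa using (hsum ω).hasSum.tendsto_sum_nat)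
  · obtain ⟨-, ⟨k, rfl⟩, hk⟩ := inter_intrinsicInterior_nonempty_of_subset_closure (C ω).convex
      (C ω).nonempty (Set.range_subset_iff.2 (hX.mem · ω)) (hX.subset_closure ω)
    exact tsum_smul_mem_intrinsicInterior (C ω) (hX.mem · ω) (ht · ω) (hsum ω) ⟨k, hk⟩

theorem MeasCorr.exists_isCastaingRepr_mem_intrinsicInterior
    (hC : MeasCorr fun ω => (C ω : Set E)) :
    ∃ Z, IsCastaingRepr (fun ω => (C ω : Set E)) Z ∧
      ∀ k ω, Z k ω ∈ intrinsicInterior ℝ (C ω : Set E) := by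
  have : ProperSpace E := FiniteDimensional.proper ℝ E
  obtain ⟨X, hX⟩ := hC.exists_isCastaingRepr (fun ω => (C ω).isClosed) fun ω => (C ω).nonempty
  obtain ⟨Y, hYm, hY⟩ := hX.exists_measurable_mem_intrinsicInterior
  let Z : ℕ → Ω → E := fun k ω => (1 / (k.unpair.2 + 1 : ℝ)) • Y ω + X k.unpair.1 ω
  have hZ : ∀ k ω, Z k ω ∈ intrinsicInterior ℝ (C ω : Set E) := fun k ω =>
    smul_add_mem_intrinsicInterior (C ω).toPointedCone (hY ω) (hX.mem _ ω) Nat.one_div_pos_of_nat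
  refine ⟨Z, ⟨fun k => (hYm.const_smul _).add (hX.measurable _),
    fun k ω => intrinsicInterior_subset (hZ k ω), fun ω =>
      hX.subset_of_isClosed isClosed_closure fun k => ?_⟩, hZ⟩
  have hlim : Tendsto (fun m => Z (Nat.pair k m) ω) atTop (𝓝 (X k ω)) := by
    simpa [Z] using ((tendsto_one_div_add_atTop_nhds_zero_nat (𝕜 := ℝ)).smul_const (Y ω)).add_const
      (X k ω)
  exact mem_closure_of_tendsto hlim (.of_forall fun m => ⟨_, rfl⟩)

end RelativeInterior

section Dual

variable {F G : Type*} [NormedAddCommGroup F] [NormedSpace ℝ F] [NormedAddCommGroup G]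
  [NormedSpace ℝ G] (p : F →ₗ[ℝ] G →ₗ[ℝ] ℝ) [p.IsContPerfPair]
  {Ω : Type*} [MeasurableSpace Ω] {K : Ω → ProperCone ℝ F}

theorem IsCastaingRepr.mem_dual_iff [MeasurableSpace F] {X : ℕ → Ω → F}
    (hX : IsCastaingRepr (fun ω => (K ω : Set F)) X) {ω : Ω} {y : G} :
    y ∈ ProperCone.dual p (K ω : Set F) ↔ ∀ k, 0 ≤ p (X k ω) y :=
  ⟨fun hy k => hy (hX.mem k ω), fun hy => hX.subset_of_isClosed (S := {x | 0 ≤ p x y})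
    (isClosed_le continuous_const p.flip.continuous_of_isContPerfPair) hy⟩

theorem IsCastaingRepr.mem_iff_of_dual [MeasurableSpace G] {Z : ℕ → Ω → G}
    (hZ : IsCastaingRepr (fun ω => (ProperCone.dual p (K ω : Set F) : Set G)) Z) {ω : Ω} {w : F} :
    w ∈ K ω ↔ ∀ k, 0 ≤ p w (Z k ω) := by
  rw [← ProperCone.dual_flip_dual p (K ω)]
  exact hZ.mem_dual_iff p.flip

theorem MeasCorr.dual [FiniteDimensional ℝ F] [FiniteDimensional ℝ G]
    (hK : MeasCorr fun ω => (K ω : Set F)) :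
    MeasCorr fun ω => (ProperCone.dual p (K ω : Set F) : Set G) := by
  borelize F
  have : ProperSpace F := FiniteDimensional.proper ℝ F
  have : ProperSpace G := FiniteDimensional.proper ℝ G
  obtain ⟨X, hX⟩ := hK.exists_isCastaingRepr (fun ω => (K ω).isClosed) fun ω => (K ω).nonempty
  have dual_eq : ∀ ω, (ProperCone.dual p (K ω : Set F) : Set G) =
      ⋂ k, p (X k ω) ⁻¹' Set.Ici 0 := fun ω => by
    ext y
    simpa using hX.mem_dual_iff p
  simp only [dual_eq]
  exact MeasCorr.iInter_preimage (H := fun _ _ => Set.Ici 0) (fun _ _ _ => .const _)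
    (fun _ _ => isClosed_Ici)
    (fun k y => (p.flip.continuous_of_isContPerfPair (x := y)).measurable.comp (hX.measurable k))
    fun _ _ => p.continuous_of_isContPerfPair

theorem exists_properCone_coe_eq {E : Type*} [AddCommGroup E] [Module ℝ E] [TopologicalSpace E]
    {K : Set E} (hcl : IsClosed K) (hconv : Convex ℝ K)
    (hcone : ∀ c : ℝ, 0 ≤ c → ∀ x ∈ K, c • x ∈ K) (h0 : (0 : E) ∈ K) :
    ∃ C : ProperCone ℝ E, (C : Set E) = K := by
  have add_mem : ∀ {x y}, x ∈ K → y ∈ K → x + y ∈ K := fun {x y} hx hy => by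
    have hmid := hcone 2 zero_le_two _ (hconv.midpoint_mem hx hy)
    rwa [midpoint_eq_smul_add, smul_smul, mul_invOf_self, one_smul] at hmid
  let C : PointedCone ℝ E :=
    { carrier := K
      add_mem' := add_mem
      zero_mem' := h0
      smul_mem' := fun c x hx => hcone c c.2 x hx }
  exact ⟨⟨C, hcl⟩, rfl⟩

instance isContPerfPair_dotProductBilin {R ι : Type*} [CommRing R] [TopologicalSpace R]
    [IsTopologicalSemiring R] [Fintype ι] :
    (dotProductBilin R R : (ι → R) →ₗ[R] (ι → R) →ₗ[R] R).IsContPerfPair := by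
  classical
  have flip_eq : (dotProductBilin R R).flip = (dotProductBilin R R : (ι → R) →ₗ[R] _) :=
    LinearMap.ext₂ fun x y => dotProduct_comm y x
  have hcont : Continuous fun z : (ι → R) × (ι → R) => dotProductBilin R R z.1 z.2 :=
    continuous_fst.dotProduct continuous_snd
  have hbij : Function.Bijective fun x : ι → R =>
      ContinuousLinearMap.mk (dotProductBilin R R x) (hcont.comp (.prodMk_right x)) :=
    ⟨fun x y h => (dotProductEquiv R ι).injective (congrArg ContinuousLinearMap.toLinearMap h),
      fun f => ((dotProductEquiv R ι).surjective f.toLinearMap).imp fun _ hx =>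
        ContinuousLinearMap.coe_injective hx⟩
  refine ⟨hcont, hbij, ?_⟩
  simpa only [flip_eq] using hbij

end Dual

section Hypograph

variable {X F : Type*}

/-- The hypograph of an extended real valued function. -/
def hypograph (f : X → EReal) : Set (X × ℝ) := {q | (q.2 : EReal) ≤ f q.1}

/-- Normal integrands in the sense of closed-valued measurable hypographical correspondences. -/
def IsNormalIntegrand {Ω : Type*} [MeasurableSpace Ω] [PseudoMetricSpace X] (W : Ω → X → EReal) :
    Prop :=
  (∀ ω, IsClosed (hypograph (W ω))) ∧ MeasCorr fun ω => hypograph (W ω)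

/-- The extension of a linear functional `ℓ` to `F ∪ {−∞}` by `ℓ(−∞) = −∞`, with `−∞` encoded
as `⊥`. -/
def extendBot [AddCommGroup F] [Module ℝ F] (ℓ : F →ₗ[ℝ] ℝ) : WithBot F → EReal :=
  WithBot.recBotCoe ⊥ fun v => (ℓ v : EReal)

/-- The hypograph of `f : X → F ∪ {−∞}` with respect to the preorder on `F` whose set of
nonnegative elements is `K`. -/
def coneHypograph [AddCommGroup F] (K : Set F) (f : X → WithBot F) : Set (X × F) :=
  {q | ∃ v : F, f q.1 = v ∧ v - q.2 ∈ K}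

theorem coneHypograph_eq_iInter_preimage_hypograph [AddCommGroup F] [Module ℝ F] {ι : Type*}
    [Nonempty ι] {K : Set F} {ℓ : ι → F →ₗ[ℝ] ℝ} (hK : ∀ w, w ∈ K ↔ ∀ i, 0 ≤ ℓ i w)
    (f : X → WithBot F) :
    coneHypograph K f = ⋂ i, Prod.map id (ℓ i) ⁻¹' hypograph fun x => extendBot (ℓ i) (f x) := by
  ext ⟨x, y⟩
  simp only [coneHypograph, hypograph, extendBot, Set.mem_ofPred_eq, Set.mem_iInter,
    Set.mem_preimage, Prod.map_apply, id_eq]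
  cases f x with
  | bot => simp
  | coe v =>
    simp only [WithBot.coe_inj, exists_eq_left', hK, map_sub, sub_nonneg, WithBot.recBotCoe_coe,
      EReal.coe_le_coe_iff]

theorem scalarize_eq_extendBot {Ω : Type*} {T d n : ℕ} (Z : Ω → Fin n → ℝ)
    (V : Ω → (Fin T → Fin d → ℝ) → WithBot (Fin n → ℝ)) :
    scalarize Z V = fun ω x => extendBot ((dotProductBilin ℝ ℝ).flip (Z ω)) (V ω x) := by
  funext ω x
  rw [scalarize]
  cases V ω x with
  | bot => rfl
  | coe v => exact congrArg Real.toEReal (dotProduct_comm (Z ω) v)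

end Hypograph

theorem stmt15_general {Ω : Type*} [MeasurableSpace Ω] {X F G : Type*} [MetricSpace X]
    [ProperSpace X] [NormedAddCommGroup F] [NormedSpace ℝ F] [FiniteDimensional ℝ F]
    [NormedAddCommGroup G] [NormedSpace ℝ G] [FiniteDimensional ℝ G] [MeasurableSpace G]
    [BorelSpace G] (p : F →ₗ[ℝ] G →ₗ[ℝ] ℝ) [p.IsContPerfPair] (K : Ω → ProperCone ℝ F)
    (hK : MeasCorr fun ω => (K ω : Set F)) (V : Ω → X → WithBot F)
    (hV : ∀ Z : Ω → G, Measurable Z →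
      (∀ ω, Z ω ∈ intrinsicInterior ℝ (ProperCone.dual p (K ω : Set F) : Set G)) →
      IsNormalIntegrand fun ω x => extendBot (p.flip (Z ω)) (V ω x)) :
    (∀ ω, IsClosed (coneHypograph (K ω : Set F) (V ω))) ∧
      MeasCorr fun ω => coneHypograph (K ω : Set F) (V ω) := by
  borelize X
  have : ProperSpace F := FiniteDimensional.proper ℝ F
  obtain ⟨Z, hZ, hZri⟩ := (hK.dual p).exists_isCastaingRepr_mem_intrinsicInterior
  have hVZ := fun k => hV (Z k) (hZ.measurable k) (hZri k)
  have hcont : ∀ k ω, Continuous (Prod.map (id : X → X) (p.flip (Z k ω))) := fun _ _ =>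
    continuous_id.prodMap p.flip.continuous_of_isContPerfPair
  have hmeas : ∀ k (q : X × F), Measurable fun ω => Prod.map (id : X → X) (p.flip (Z k ω)) q :=
    fun k q => measurable_const.prodMk
      ((p.continuous_of_isContPerfPair (x := q.2)).measurable.comp (hZ.measurable k))
  have hypo_eq := fun ω => coneHypograph_eq_iInter_preimage_hypograph
    (ℓ := fun k => p.flip (Z k ω)) (fun _ => hZ.mem_iff_of_dual p) (V ω)
  simp only [hypo_eq]
  exact ⟨fun ω => isClosed_iInter fun k => ((hVZ k).1 ω).preimage (hcont k ω),
    .iInter_preimage (fun k => (hVZ k).2) (fun k => (hVZ k).1) hmeas hcont⟩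

/-- if every scalarization `V_Z` of the `ℝ^n ∪ {−∞}`-valued map `V`, by
measurable selections `Z` of `ri K°`, is a normal integrand, then the hypograph
correspondence `ω ↦ {(x,y) : V(ω,x) − y ∈ K(ω)}` is closed valued and measurable. -/
theorem stmt15 {Ω : Type*} {mΩ : MeasurableSpace Ω} (P : Measure Ω) [IsProbabilityMeasure P]
    (T d n : ℕ) (hT : 1 ≤ T) (hd : 1 ≤ d)
    -- K: a measurable correspondence with closed convex cone values
    (K : Ω → Set (Fin n → ℝ))
    (hKmeas : MeasCorr K)
    (hKclosed : ∀ ω, IsClosed (K ω))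
    (hKconv : ∀ ω, Convex ℝ (K ω))
    (hKcone : ∀ ω (c : ℝ), 0 ≤ c → ∀ x ∈ K ω, c • x ∈ K ω)
    (hK0 : ∀ ω, (0 : Fin n → ℝ) ∈ K ω)
    -- V with normal-integrand scalarizations
    (V : Ω → (Fin T → Fin d → ℝ) → WithBot (Fin n → ℝ))
    (hscal : ∀ Z : Ω → Fin n → ℝ, Measurable Z →
      (∀ ω, Z ω ∈ intrinsicInterior ℝ (polarCone (K ω))) →
      (∀ ω, IsClosed {xb : (Fin T → Fin d → ℝ) × ℝ |
          (xb.2 : EReal) ≤ scalarize Z V ω xb.1}) ∧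
      (∀ (c : (Fin T → Fin d → ℝ) × ℝ) (s : ℝ),
        MeasurableSet {ω | (Metric.ball c s ∩ {xb : (Fin T → Fin d → ℝ) × ℝ |
          (xb.2 : EReal) ≤ scalarize Z V ω xb.1}).Nonempty})) :
    -- conclusion: the vector hypograph correspondence is closed valued and measurable
    (∀ ω, IsClosed {xy : (Fin T → Fin d → ℝ) × (Fin n → ℝ) |
        ∃ v : Fin n → ℝ, V ω xy.1 = (v : WithBot (Fin n → ℝ)) ∧ v - xy.2 ∈ K ω}) ∧
    MeasCorr (fun ω => {xy : (Fin T → Fin d → ℝ) × (Fin n → ℝ) |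
        ∃ v : Fin n → ℝ, V ω xy.1 = (v : WithBot (Fin n → ℝ)) ∧ v - xy.2 ∈ K ω}) := by
  choose C hC using fun ω =>
    exists_properCone_coe_eq (hKclosed ω) (hKconv ω) (hKcone ω) (hK0 ω)
  obtain rfl : (fun ω => (C ω : Set (Fin n → ℝ))) = K := funext hC
  exact stmt15_general (dotProductBilin ℝ ℝ) C hKmeas V fun Z hZ hri =>
    scalarize_eq_extendBot Z V ▸ hscal Z hZ hri

end
end

section
/- Let A : Ω ⇉ ℝ^n be a measurable correspondence with nonempty convex values. Then A admits a measurable selection of its relative interior: there exists an 𝓕-measurable map ρ : Ω → ℝ^n with ρ(ω) ∈ ri A(ω) for every ω. -/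
open MeasureTheory Filter Topology

noncomputable section

/-
Choose measurable selections `f₀, f₁, …` of `closure (A ω)` whose values are dense in it. Since
the relative interior is nonempty and relatively open, some `f_k ω` lies in it. Averaging all the
`f_k ω` against a probability measure on `ℕ` that charges every point gives a proper convex
combination of a relative interior point and a point of the closure, which is again a relative
interior point; and the average depends measurably on `ω`. To make the average converge, the
selections are first pulled along segments into the unit ball around `f₀ ω`, which keeps relative
interior points in the relative interior.
-/

section IntrinsicInterior

theorem exists_isOpen_intrinsicInterior_eq_inter_affineSpan (𝕜 : Type*) {V P : Type*} [Ring 𝕜]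
    [AddCommGroup V] [Module 𝕜 V] [TopologicalSpace P] [AddTorsor V P] (s : Set P) :
    ∃ U, IsOpen U ∧ intrinsicInterior 𝕜 s = U ∩ affineSpan 𝕜 s := by
  obtain ⟨U, hU, hUs⟩ :=
    isOpen_induced_iff.1 (isOpen_interior (s := ((↑) ⁻¹' s : Set (affineSpan 𝕜 s))))
  refine ⟨U, hU, ?_⟩
  rw [intrinsicInterior, ← hUs]
  exact Subtype.image_preimage_coe _ _ |>.trans (Set.inter_comm _ _)

theorem exists_mem_intrinsicInterior_of_dense {V ι : Type*} [NormedAddCommGroup V]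
    [NormedSpace ℝ V] [FiniteDimensional ℝ V] {s : Set V} (hs : Convex ℝ s) (hne : s.Nonempty)
    {f : ι → V} (hf : closure (Set.range f) = closure s) : ∃ i, f i ∈ intrinsicInterior ℝ s := by
  obtain ⟨x, hx⟩ := hne.intrinsicInterior hs
  obtain ⟨U, hU, hUs⟩ := exists_isOpen_intrinsicInterior_eq_inter_affineSpan ℝ s
  have hxf : x ∈ closure (Set.range f) := hf ▸ subset_closure (intrinsicInterior_subset hx)
  rw [hUs] at hx ⊢
  obtain ⟨_, hiU, i, rfl⟩ := mem_closure_iff.1 hxf U hU hx.1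
  have hi : f i ∈ intrinsicClosure ℝ s := by
    rw [intrinsicClosure_eq_closure, ← hf]
    exact subset_closure ⟨i, rfl⟩
  exact ⟨i, hiU, intrinsicClosure_subset_affineSpan hi⟩

theorem openSegment_intrinsicInterior_intrinsicClosure_subset {V : Type*} [AddCommGroup V]
    [Module ℝ V] [TopologicalSpace V] [IsTopologicalAddGroup V] [ContinuousSMul ℝ V]
    {s : Set V} (hs : Convex ℝ s) {x y : V} (hx : x ∈ intrinsicInterior ℝ s)
    (hy : y ∈ intrinsicClosure ℝ s) : openSegment ℝ x y ⊆ intrinsicInterior ℝ s := by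
  obtain ⟨x, hx, rfl⟩ := hx
  obtain ⟨y, hy, rfl⟩ := hy
  have : Nonempty (affineSpan ℝ s) := ⟨x⟩
  -- Mathlib's result for `interior` needs a vector space, here the direction of the affine span.
  let e := ContinuousAffineEquiv.vaddConst ℝ (Classical.arbitrary (affineSpan ℝ s))
  let φ := (affineSpan ℝ s).subtype.comp e.toAffineMap
  obtain ⟨v, rfl⟩ := e.surjective x
  obtain ⟨w, rfl⟩ := e.surjective y
  have hv : v ∈ interior (φ ⁻¹' s) := (e.toHomeomorph.preimage_interior _).subset hx
  have hw : w ∈ closure (φ ⁻¹' s) := (e.toHomeomorph.preimage_closure _).subset hy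
  have hvw : openSegment ℝ v w ⊆ interior (φ ⁻¹' s) :=
    (hs.affine_preimage φ).openSegment_interior_closure_subset_interior hv hw
  change openSegment ℝ (φ v) (φ w) ⊆ _
  rw [← image_openSegment, Set.image_subset_iff]
  exact fun u hu => ⟨e u, (e.toHomeomorph.preimage_interior _).superset (hvw hu), rfl⟩

theorem average_mem_intrinsicInterior_of_set {α V : Type*} [MeasurableSpace α]
    [NormedAddCommGroup V] [NormedSpace ℝ V] [FiniteDimensional ℝ V] {μ : Measure α}
    [IsFiniteMeasure μ] {s : Set V} (hs : Convex ℝ s) {t : Set α} (ht : MeasurableSet t)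
    (h0 : μ t ≠ 0) {f : α → V} (hfs : ∀ᵐ x ∂μ, f x ∈ closure s) (hfi : Integrable f μ)
    (hft : ⨍ x in t, f x ∂μ ∈ intrinsicInterior ℝ s) :
    ⨍ x, f x ∂μ ∈ intrinsicInterior ℝ s := by
  by_cases hc : μ tᶜ = 0
  · rwa [Measure.restrict_eq_self_of_ae_mem (compl_compl t ▸ compl_mem_ae_iff.2 hc)] at hft
  have : CompleteSpace V := FiniteDimensional.complete ℝ V
  have hcompl : ⨍ x in tᶜ, f x ∂μ ∈ closure s :=
    hs.closure.set_average_mem isClosed_closure hc (measure_ne_top μ _) (ae_restrict_of_ae hfs)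
      hfi.integrableOn
  rw [← intrinsicClosure_eq_closure ℝ] at hcompl
  exact openSegment_intrinsicInterior_intrinsicClosure_subset hs hft hcompl
    (average_mem_openSegment_compl_self ht.nullMeasurableSet h0 hc hfi)

theorem integral_mem_intrinsicInterior_of_mem {α V : Type*} [MeasurableSpace α]
    [MeasurableSingletonClass α] [NormedAddCommGroup V] [NormedSpace ℝ V] [FiniteDimensional ℝ V]
    {μ : Measure α} [IsProbabilityMeasure μ] {s : Set V} (hs : Convex ℝ s) {f : α → V}
    (hfs : ∀ᵐ x ∂μ, f x ∈ closure s) (hfi : Integrable f μ) {a : α} (ha : μ {a} ≠ 0)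
    (hfa : f a ∈ intrinsicInterior ℝ s) : ∫ x, f x ∂μ ∈ intrinsicInterior ℝ s := by
  have : CompleteSpace V := FiniteDimensional.complete ℝ V
  have haverage : ⨍ x in {a}, f x ∂μ = f a := by
    have hμa : μ.real {a} ≠ 0 := (measureReal_ne_zero_iff (measure_ne_top μ _)).2 ha
    rw [setAverage_eq, integral_singleton, inv_smul_smul₀ hμa]
  rw [← average_eq_integral]
  exact average_mem_intrinsicInterior_of_set hs (measurableSet_singleton a) ha hfs hfi
    (haverage.symm ▸ hfa)

end IntrinsicInterior

section Contraction

variable {V : Type*} [NormedAddCommGroup V] [NormedSpace ℝ V]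

/-- The point of the segment from `a` to `x` obtained by contracting `x` towards `a` into the
closed unit ball around `a`. The ratio `1 / (2 + dist a x)` is always strictly between `0` and `1`,
so that the result is in the open segment even for `x` near `a`. -/
def contractTo (a x : V) : V :=
  AffineMap.lineMap a x (2 + dist a x)⁻¹

theorem contractTo_mem_openSegment (a x : V) : contractTo a x ∈ openSegment ℝ a x :=
  lineMap_mem_openSegment ℝ a x
    ⟨by positivity, inv_lt_one_of_one_lt₀ (by linarith [dist_nonneg (x := a) (y := x)])⟩

theorem dist_contractTo_le_one (a x : V) : dist (contractTo a x) a ≤ 1 := by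
  rw [contractTo, dist_lineMap_left, Real.norm_of_nonneg (by positivity)]
  exact inv_mul_le_one_of_le₀ (by linarith) (by positivity)

theorem continuous_contractTo : Continuous fun p : V × V => contractTo p.1 p.2 := by
  unfold contractTo
  have hne (p : V × V) : 2 + dist p.1 p.2 ≠ 0 := by positivity
  fun_prop (disch := exact hne _)

theorem integrable_contractTo {α : Type*} [MeasurableSpace α] {μ : Measure α} [IsFiniteMeasure μ]
    (a : V) {f : α → V} (hf : AEStronglyMeasurable f μ) :
    Integrable (fun x => contractTo a (f x)) μ := by
  refine .of_bound (C := 1 + ‖a‖) ?_ (.of_forall fun x => ?_)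
  · have hpair : AEStronglyMeasurable (fun x => (a, f x)) μ := aestronglyMeasurable_const.prodMk hf
    exact (continuous_contractTo.comp_aestronglyMeasurable hpair :)
  · have := dist_contractTo_le_one a (f x)
    exact (norm_le_norm_add_norm_sub' _ a).trans (by rw [← dist_eq_norm]; linarith)

end Contraction

namespace MeasCorr

variable {Ω E : Type*} [MeasurableSpace Ω] [PseudoMetricSpace E] {A : Ω → Set E}

theorem measurable_infDist_const (hA : MeasCorr A) (hne : ∀ ω, (A ω).Nonempty) (q : E) :
    Measurable fun ω => Metric.infDist q (A ω) := by
  refine measurable_of_Iio fun r => ?_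
  convert hA q r using 1
  ext ω
  simp only [Set.mem_preimage, Set.mem_Iio, Metric.infDist_lt_iff (hne ω), Set.mem_ofPred_eq,
    Set.inter_nonempty, Metric.mem_ball', and_comm]

variable [SecondCountableTopology E] [Nonempty E] [MeasurableSpace E] [BorelSpace E]

theorem exists_infDist_lt_half (hA : MeasCorr A) (hne : ∀ ω, (A ω).Nonempty) {ε : Ω → ℝ}
    (hε : Measurable ε) {g : Ω → E} (hg : Measurable g)
    (hgA : ∀ ω, Metric.infDist (g ω) (A ω) < ε ω) :
    ∃ g' : Ω → E, Measurable g' ∧ (∀ ω, Metric.infDist (g' ω) (A ω) < ε ω / 2) ∧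
      ∀ ω, dist (g ω) (g' ω) < ε ω := by
  classical
  let d := TopologicalSpace.denseSeq E
  let p (ω : Ω) (j : ℕ) : Prop := Metric.infDist (d j) (A ω) < ε ω / 2 ∧ dist (g ω) (d j) < ε ω
  have hp_meas (j : ℕ) : MeasurableSet {ω | p ω j} :=
    (measurableSet_lt (hA.measurable_infDist_const hne _) (hε.div_const 2)).inter
      (measurableSet_lt (hg.dist measurable_const) hε)
  have hp (ω : Ω) : ∃ j, p ω j := by
    obtain ⟨a, ha, hga⟩ := (Metric.infDist_lt_iff (hne ω)).1 (hgA ω)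
    have hε₀ : 0 < ε ω := dist_nonneg.trans_lt hga
    obtain ⟨j, hj⟩ := (TopologicalSpace.denseRange_denseSeq E).exists_dist_lt a
      (lt_min (half_pos hε₀) (sub_pos.2 hga))
    obtain ⟨hj_half, hj_sub⟩ := lt_min_iff.1 hj
    refine ⟨j, (Metric.infDist_le_dist_of_mem ha).trans_lt (dist_comm a _ ▸ hj_half), ?_⟩
    linarith [dist_triangle (g ω) a (d j)]
  exact ⟨fun ω => d (Nat.find (hp ω)), measurable_from_nat.comp (measurable_find hp hp_meas),
    fun ω => (Nat.find_spec (hp ω)).1, fun ω => (Nat.find_spec (hp ω)).2⟩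

theorem exists_seq_infDist_lt (hA : MeasCorr A) (hne : ∀ ω, (A ω).Nonempty) {ε : Ω → ℝ}
    (hε : Measurable ε) {g : Ω → E} (hg : Measurable g)
    (hgA : ∀ ω, Metric.infDist (g ω) (A ω) < ε ω) :
    ∃ u : ℕ → Ω → E, u 0 = g ∧ (∀ n, Measurable (u n)) ∧
      (∀ n ω, Metric.infDist (u n ω) (A ω) < ε ω / 2 ^ n) ∧
      ∀ n ω, dist (u n ω) (u (n + 1) ω) < ε ω / 2 ^ n := by
  choose! next hnext_meas hnext_infDist hnext_dist using fun (n : ℕ) (v : Ω → E) =>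
    hA.exists_infDist_lt_half hne (hε.div_const (2 ^ n)) (g := v)
  let u (n : ℕ) : Ω → E := Nat.rec g next n
  have hu (n : ℕ) : Measurable (u n) ∧ ∀ ω, Metric.infDist (u n ω) (A ω) < ε ω / 2 ^ n := by
    induction n with
    | zero => exact ⟨hg, by simpa [u] using hgA⟩
    | succ n ih =>
      refine ⟨hnext_meas n (u n) ih.1 ih.2, fun ω => ?_⟩
      rw [pow_succ, ← div_div]
      exact hnext_infDist n (u n) ih.1 ih.2 ω
  exact ⟨u, rfl, fun n => (hu n).1, fun n => (hu n).2,
    fun n => hnext_dist n (u n) (hu n).1 (hu n).2⟩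

variable [CompleteSpace E]

theorem exists_measurable_mem_closure_dist_le (hA : MeasCorr A) (hne : ∀ ω, (A ω).Nonempty)
    {ε : Ω → ℝ} (hε : Measurable ε) {g : Ω → E} (hg : Measurable g)
    (hgA : ∀ ω, Metric.infDist (g ω) (A ω) < ε ω) :
    ∃ f : Ω → E, Measurable f ∧ (∀ ω, f ω ∈ closure (A ω)) ∧
      ∀ ω, dist (g ω) (f ω) ≤ 2 * ε ω := by
  obtain ⟨u, rfl, hu, hu_infDist, hu_dist⟩ := hA.exists_seq_infDist_lt hne hε hg hgA
  have hu_geom (ω : Ω) (n : ℕ) : dist (u n ω) (u (n + 1) ω) ≤ 2 * ε ω / 2 / 2 ^ n := by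
    rw [mul_div_cancel_left₀ _ two_ne_zero]
    exact (hu_dist n ω).le
  choose f hf using fun ω =>
    cauchySeq_tendsto_of_complete (cauchySeq_of_le_geometric_two (hu_geom ω))
  refine ⟨f, measurable_of_tendsto_metrizable hu (tendsto_pi_nhds.2 hf), fun ω => ?_,
    fun ω => dist_le_of_le_geometric_two_of_tendsto₀ (hu_geom ω) (hf ω)⟩
  have hinfDist : Tendsto (fun n => Metric.infDist (u n ω) (A ω)) atTop
      (𝓝 (Metric.infDist (f ω) (A ω))) :=
    ((Metric.continuous_infDist_pt (A ω)).tendsto _).comp (hf ω)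
  have hbound : Tendsto (fun n : ℕ => ε ω / 2 ^ n) atTop (𝓝 0) :=
    tendsto_const_nhds.div_atTop (tendsto_pow_atTop_atTop_of_one_lt one_lt_two)
  rw [Metric.mem_closure_iff_infDist_zero (hne ω)]
  exact le_antisymm (le_of_tendsto_of_tendsto' hinfDist hbound fun n => (hu_infDist n ω).le)
    Metric.infDist_nonneg

theorem exists_castaing (hA : MeasCorr A) (hne : ∀ ω, (A ω).Nonempty) :
    ∃ f : ℕ → Ω → E, (∀ k, Measurable (f k)) ∧
      ∀ ω, closure (Set.range fun k => f k ω) = closure (A ω) := by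
  let d := TopologicalSpace.denseSeq E
  have near (i m : ℕ) : ∃ f : Ω → E, Measurable f ∧ (∀ ω, f ω ∈ closure (A ω)) ∧
      ∀ ω, dist (d i) (f ω) ≤ 2 * (Metric.infDist (d i) (A ω) + 1 / ((m : ℝ) + 1)) :=
    hA.exists_measurable_mem_closure_dist_le hne
      ((hA.measurable_infDist_const hne (d i)).add_const _) measurable_const
      fun ω => lt_add_of_pos_right _ Nat.one_div_pos_of_nat
  choose F hF hFA hFd using near
  refine ⟨fun k => F k.unpair.1 k.unpair.2, fun k => hF _ _, fun ω => subset_antisymm ?_ ?_⟩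
  · exact closure_minimal (Set.range_subset_iff.2 fun k => hFA _ _ ω) isClosed_closure
  refine closure_minimal (fun x hx => Metric.mem_closure_range_iff.2 fun ε hε => ?_)
    isClosed_closure
  obtain ⟨m, hm⟩ := exists_nat_one_div_lt (show 0 < ε / 5 by positivity)
  obtain ⟨i, hi⟩ := (TopologicalSpace.denseRange_denseSeq E).exists_dist_lt x
    (show 0 < ε / 5 by positivity)
  refine ⟨Nat.pair i m, ?_⟩
  simp only [Nat.unpair_pair]
  have hinfDist : Metric.infDist (d i) (A ω) ≤ dist x (d i) :=
    dist_comm x (d i) ▸ Metric.infDist_le_dist_of_mem hx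
  calc dist x (F i m ω)
      ≤ dist x (d i) + dist (d i) (F i m ω) := dist_triangle _ _ _
    _ ≤ dist x (d i) + 2 * (dist x (d i) + 1 / ((m : ℝ) + 1)) := by
      grw [hFd i m ω, hinfDist]
    _ < ε := by linarith

end MeasCorr

theorem stmt17_general {Ω E : Type*} [MeasurableSpace Ω] [NormedAddCommGroup E] [NormedSpace ℝ E]
    [FiniteDimensional ℝ E] [MeasurableSpace E] [BorelSpace E] {A : Ω → Set E}
    (hA : MeasCorr A) (hne : ∀ ω, (A ω).Nonempty) (hconv : ∀ ω, Convex ℝ (A ω)) :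
    ∃ ρ : Ω → E, Measurable ρ ∧ ∀ ω, ρ ω ∈ intrinsicInterior ℝ (A ω) := by
  have : CompleteSpace E := FiniteDimensional.complete ℝ E
  obtain ⟨f, hf, hfA⟩ := hA.exists_castaing hne
  have hmem (k : ℕ) (ω : Ω) : f k ω ∈ closure (A ω) := hfA ω ▸ subset_closure ⟨k, rfl⟩
  let μ : Measure ℕ := ProbabilityTheory.poissonMeasure 1
  refine ⟨fun ω => ∫ k, contractTo (f 0 ω) (f k ω) ∂μ, ?_, fun ω => ?_⟩
  · have hpair (k : ℕ) : Measurable fun ω => (f 0 ω, f k ω) := (hf 0).prodMk (hf k)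
    have hjoint : Measurable fun p : Ω × ℕ => contractTo (f 0 p.1) (f p.2 p.1) :=
      measurable_from_prod_countable_left fun k =>
        (continuous_contractTo.measurable.comp (hpair k) :)
    exact hjoint.stronglyMeasurable.integral_prod_right'.measurable
  · obtain ⟨k, hk⟩ := exists_mem_intrinsicInterior_of_dense (hconv ω) (hne ω) (hfA ω)
    have hμk : μ {k} ≠ 0 := (measureReal_ne_zero_iff (measure_ne_top μ _)).1
      (ProbabilityTheory.poissonMeasure_real_singleton_pos k one_pos).ne'
    have hclosure (j : ℕ) : contractTo (f 0 ω) (f j ω) ∈ closure (A ω) :=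
      (hconv ω).closure.openSegment_subset (hmem 0 ω) (hmem j ω) (contractTo_mem_openSegment _ _)
    have hzero : f 0 ω ∈ intrinsicClosure ℝ (A ω) :=
      (intrinsicClosure_eq_closure ℝ (A ω)).symm ▸ hmem 0 ω
    have hinterior : contractTo (f 0 ω) (f k ω) ∈ intrinsicInterior ℝ (A ω) := by
      apply openSegment_intrinsicInterior_intrinsicClosure_subset (hconv ω) hk hzero
      rw [openSegment_symm]
      exact contractTo_mem_openSegment _ _
    exact integral_mem_intrinsicInterior_of_mem (hconv ω) (.of_forall hclosure)
      (integrable_contractTo _ .of_discrete) hμk hinterior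

/-- a measurable correspondence with nonempty convex values admits a
measurable selection of its relative interior. -/
theorem stmt17 {Ω : Type*} {mΩ : MeasurableSpace Ω} (P : Measure Ω) [IsProbabilityMeasure P]
    (n : ℕ) (A : Ω → Set (Fin n → ℝ))
    (hAmeas : MeasCorr A)
    (hAne : ∀ ω, (A ω).Nonempty)
    (hAconv : ∀ ω, Convex ℝ (A ω)) :
    ∃ ρ : Ω → Fin n → ℝ, Measurable ρ ∧ ∀ ω, ρ ω ∈ intrinsicInterior ℝ (A ω) := by
  exact stmt17_general hAmeas hAne hAconv

end
end

section
/- Let A : Ω ⇉ ℝ^n be a measurable correspondence with nonempty convex values. Then the correspondence ω ↦ ri A(ω) (the relative interior of A(ω)) is measurable. -/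
/-!
A convex set is contained in the closure of its relative interior: the homotheties centred at a
point `x` of the set with ratio in `(0, 1)` are open maps of the affine span and preserve the set,
so they push a relative interior point along a segment of relative interior points ending at `x`.
An open ball meets a set exactly when it meets the closure of the set, so measurability of a
correspondence depends only on the closures of its values.
-/

open MeasureTheory Filter Topology

noncomputable section

theorem measCorr_closure_iff {Ω : Type*} [MeasurableSpace Ω] {E : Type*} [PseudoMetricSpace E]
    {C : Ω → Set E} : MeasCorr (fun ω => closure (C ω)) ↔ MeasCorr C := by
  simp only [MeasCorr, Set.inter_comm (Metric.ball _ _),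
    closure_inter_open_nonempty_iff Metric.isOpen_ball]

section IntrinsicInterior

variable {𝕜 E : Type*} [Field 𝕜] [LinearOrder 𝕜] [IsStrictOrderedRing 𝕜] [AddCommGroup E]
  [Module 𝕜 E] [TopologicalSpace E] [IsTopologicalAddGroup E]

theorem openSegment_subset_intrinsicInterior_of_starConvex [ContinuousConstSMul 𝕜 E]
    {s : Set E} {x y : E} (hs : StarConvex 𝕜 x s) (hy : y ∈ intrinsicInterior 𝕜 s) :
    openSegment 𝕜 x y ⊆ intrinsicInterior 𝕜 s := by
  have hx : x ∈ s := hs.mem ⟨y, intrinsicInterior_subset hy⟩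
  let x' : affineSpan 𝕜 s := ⟨x, subset_affineSpan 𝕜 s hx⟩
  have : Nonempty (affineSpan 𝕜 s) := ⟨x'⟩
  obtain ⟨y', hy', rfl⟩ := mem_intrinsicInterior.1 hy
  rw [openSegment_eq_image_lineMap]
  rintro _ ⟨t, ⟨ht0, ht1⟩, rfl⟩
  have hmaps : Set.MapsTo (AffineMap.homothety x' t) ((↑) ⁻¹' s) ((↑) ⁻¹' s) := by
    intro z hz
    exact hs.openSegment_subset hz (openSegment_eq_image_lineMap 𝕜 x z ▸ ⟨t, ⟨ht0, ht1⟩, rfl⟩)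
  have : ContinuousConstSMul 𝕜 (affineSpan 𝕜 s).direction :=
    IsInducing.subtypeVal.continuousConstSMul id rfl
  have hopen : IsOpenMap (AffineMap.homothety x' t) :=
    AffineMap.homothety_isOpenMap x' t ht0.ne'
  exact mem_intrinsicInterior.2
    ⟨AffineMap.homothety x' t y', hopen.mapsTo_interior hmaps hy', rfl⟩

theorem closure_intrinsicInterior_eq_closure_of_nonempty [TopologicalSpace 𝕜] [OrderTopology 𝕜]
    [ContinuousSMul 𝕜 E] {s : Set E} (hs : Convex 𝕜 s)
    (hne : (intrinsicInterior 𝕜 s).Nonempty) :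
    closure (intrinsicInterior 𝕜 s) = closure s := by
  obtain ⟨y, hy⟩ := hne
  refine (closure_mono intrinsicInterior_subset).antisymm
    (closure_minimal (fun x hx => ?_) isClosed_closure)
  exact closure_mono (openSegment_subset_intrinsicInterior_of_starConvex (hs hx) hy)
    (segment_subset_closure_openSegment (left_mem_segment 𝕜 x y))

end IntrinsicInterior

theorem closure_intrinsicInterior_eq_closure {E : Type*} [NormedAddCommGroup E] [NormedSpace ℝ E]
    [FiniteDimensional ℝ E] {s : Set E} (hs : Convex ℝ s) :
    closure (intrinsicInterior ℝ s) = closure s := by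
  rcases s.eq_empty_or_nonempty with rfl | hne
  · rw [intrinsicInterior_empty]
  · exact closure_intrinsicInterior_eq_closure_of_nonempty hs (hne.intrinsicInterior hs)

theorem stmt18_general {Ω : Type*} [MeasurableSpace Ω] {E : Type*} [NormedAddCommGroup E]
    [NormedSpace ℝ E] [FiniteDimensional ℝ E] {A : Ω → Set E} (hAconv : ∀ ω, Convex ℝ (A ω)) :
    MeasCorr (fun ω => intrinsicInterior ℝ (A ω)) ↔ MeasCorr A := by
  rw [← measCorr_closure_iff]
  simp only [closure_intrinsicInterior_eq_closure (hAconv _), measCorr_closure_iff]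

/-- for a measurable correspondence `A` with nonempty convex values, the
relative interior correspondence `ω ↦ ri A(ω)` is measurable. -/
theorem stmt18 {Ω : Type*} {mΩ : MeasurableSpace Ω} (P : Measure Ω) [IsProbabilityMeasure P]
    (n : ℕ) (A : Ω → Set (Fin n → ℝ))
    (hAmeas : MeasCorr A)
    (hAne : ∀ ω, (A ω).Nonempty)
    (hAconv : ∀ ω, Convex ℝ (A ω)) :
    MeasCorr (fun ω => intrinsicInterior ℝ (A ω)) :=
  (stmt18_general hAconv).2 hAmeas

end
end

section
/- Let A : Ω ⇉ ℝ^n be a measurable correspondence with convex values whose interior is nonempty almost surely, and let ρ be a measurable selection of the interior of A (ρ(ω) ∈ int A(ω) a.s.). Then there exists an 𝓕-measurable random variable r : Ω → ℝ with r > 0 a.s. such that the open ball B_{r(ω)}(ρ(ω)) is contained in A(ω) for almost every ω. -/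
open MeasureTheory Filter Topology

noncomputable section

/-!
The radius is the distance from `ρ ω` to the complement of `closure (A ω)`, truncated at `1`.
That complement is open, so the distance is an infimum over the points of a countable dense set
lying outside `closure (A ω)`, and whether a fixed point lies in `closure (A ω)` is decided by
countably many balls; hence the radius is measurable. The ball obtained this way lies in
`closure (A ω)`, and passes to `A ω` because a convex set with nonempty interior has the same
interior as its closure.
-/

open Metric Set
open scoped ENNReal

section Inradius

variable {E : Type*} [PseudoMetricSpace E]

/-- The inradius of `s` at `x`: the largest radius, at most `1`, of an open ball centered at `x`
and contained in `s`. The truncation makes it `1` when `s` is the whole space, where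
`Metric.infDist x sᶜ` takes the junk value `0`. -/
def inradiusAt (s : Set E) (x : E) : ℝ :=
  (min 1 (infEDist x sᶜ)).toReal

theorem ball_inradiusAt_subset (s : Set E) (x : E) : ball x (inradiusAt s x) ⊆ s := by
  intro y hy
  by_contra hys
  have hne : min 1 (infEDist x sᶜ) ≠ ∞ := ne_top_of_le_ne_top ENNReal.one_ne_top (min_le_left _ _)
  have hlt : edist x y < infEDist x sᶜ := calc
    edist x y < min 1 (infEDist x sᶜ) := by
      rw [edist_dist, ENNReal.ofReal_lt_iff_lt_toReal dist_nonneg hne]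
      exact mem_ball'.1 hy
    _ ≤ infEDist x sᶜ := min_le_right _ _
  exact hlt.not_ge (infEDist_le_edist_of_mem hys)

theorem inradiusAt_pos {s : Set E} {x : E} (hx : x ∈ interior s) : 0 < inradiusAt s x := by
  have hpos : 0 < infEDist x sᶜ := by
    rwa [infEDist_pos_iff_notMem_closure, closure_compl, notMem_compl_iff]
  exact ENNReal.toReal_pos (lt_min one_pos hpos).ne'
    (ne_top_of_le_ne_top ENNReal.one_ne_top (min_le_left _ _))

end Inradius

theorem infEDist_inter_of_isOpen_of_dense {E : Type*} [PseudoEMetricSpace E] {U D : Set E}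
    (hU : IsOpen U) (hD : Dense D) (x : E) : infEDist x (U ∩ D) = infEDist x U :=
  le_antisymm (infEDist_closure.ge.trans (infEDist_anti (hD.open_subset_closure_inter hU)))
    (infEDist_anti inter_subset_left)

section Measurability

variable {Ω : Type*} [MeasurableSpace Ω] {E : Type*}

theorem measurable_infEDist_of_isOpen [PseudoEMetricSpace E] [TopologicalSpace.SeparableSpace E]
    [MeasurableSpace E] [OpensMeasurableSpace E] {U : Ω → Set E} (hUo : ∀ ω, IsOpen (U ω))
    (hU : ∀ x, MeasurableSet {ω | x ∈ U ω}) {ρ : Ω → E} (hρ : Measurable ρ) :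
    Measurable fun ω => infEDist (ρ ω) (U ω) := by
  classical
  obtain ⟨D, hDc, hDd⟩ := TopologicalSpace.exists_countable_dense E
  have hinf (ω : Ω) :
      infEDist (ρ ω) (U ω) = ⨅ d ∈ D, if d ∈ U ω then edist (ρ ω) d else ∞ := by
    rw [← infEDist_inter_of_isOpen_of_dense (hUo ω) hDd, inter_comm]
    simp only [infEDist, mem_inter_iff, iInf_and, iInf_eq_if (p := _ ∈ U ω)]
  simp only [hinf]
  exact .biInf D hDc fun d _ => .ite (hU d) (measurable_edist_left.comp hρ) measurable_const

namespace MeasCorr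

variable [PseudoMetricSpace E] {C : Ω → Set E}

theorem measurableSet_mem_closure (hC : MeasCorr C) (x : E) :
    MeasurableSet {ω | x ∈ closure (C ω)} := by
  simp only [mem_closure_iff_nhds_basis' nhds_basis_ball_inv_nat_succ, forall_const,
    ofPred_forall]
  exact .iInter fun _ => hC x _

theorem measurable_inradiusAt_closure [TopologicalSpace.SeparableSpace E] [MeasurableSpace E]
    [OpensMeasurableSpace E] (hC : MeasCorr C) {ρ : Ω → E} (hρ : Measurable ρ) :
    Measurable fun ω => inradiusAt (closure (C ω)) (ρ ω) :=
  (measurable_const.min (measurable_infEDist_of_isOpen (fun _ => isClosed_closure.isOpen_compl)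
    (fun x => (hC.measurableSet_mem_closure x).compl) hρ)).ennreal_toReal

end MeasCorr

end Measurability

theorem ball_inradiusAt_closure_subset_of_convex {E : Type*} [SeminormedAddCommGroup E]
    [NormedSpace ℝ E] {s : Set E} (hs : Convex ℝ s) (hne : (interior s).Nonempty) (x : E) :
    ball x (inradiusAt (closure s) x) ⊆ s := calc
  ball x (inradiusAt (closure s) x) ⊆ interior (closure s) :=
    interior_maximal (ball_inradiusAt_subset _ x) isOpen_ball
  _ = interior s := hs.interior_closure_eq_interior_of_nonempty_interior hne
  _ ⊆ s := interior_subset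

theorem stmt19_general {Ω : Type*} [MeasurableSpace Ω] {E : Type*} [SeminormedAddCommGroup E]
    [NormedSpace ℝ E] [TopologicalSpace.SeparableSpace E] [MeasurableSpace E]
    [OpensMeasurableSpace E] {A : Ω → Set E} (hAmeas : MeasCorr A)
    (hAconv : ∀ ω, Convex ℝ (A ω)) {ρ : Ω → E} (hρ : Measurable ρ) :
    ∃ r : Ω → ℝ, Measurable r ∧
      ∀ ω, ρ ω ∈ interior (A ω) → 0 < r ω ∧ ball (ρ ω) (r ω) ⊆ A ω :=
  ⟨fun ω => inradiusAt (closure (A ω)) (ρ ω), hAmeas.measurable_inradiusAt_closure hρ,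
    fun ω hω => ⟨inradiusAt_pos (interior_mono subset_closure hω),
      ball_inradiusAt_closure_subset_of_convex (hAconv ω) ⟨_, hω⟩ _⟩⟩

/-- for a measurable convex-valued correspondence `A` with a.s. nonempty
interior and a measurable selection `ρ` of `int A`, there is a measurable random radius
`r > 0` a.s. with `B_{r(ω)}(ρ(ω)) ⊆ A(ω)` for a.e. `ω`. -/
theorem stmt19 {Ω : Type*} {mΩ : MeasurableSpace Ω} (P : Measure Ω) [IsProbabilityMeasure P]
    (n : ℕ) (A : Ω → Set (Fin n → ℝ))
    (hAmeas : MeasCorr A)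
    (hAconv : ∀ ω, Convex ℝ (A ω))
    (hAint : ∀ᵐ ω ∂P, (interior (A ω)).Nonempty)
    (ρ : Ω → Fin n → ℝ) (hρmeas : Measurable ρ)
    (hρsel : ∀ᵐ ω ∂P, ρ ω ∈ interior (A ω)) :
    ∃ r : Ω → ℝ, Measurable r ∧ (∀ᵐ ω ∂P, 0 < r ω) ∧
      ∀ᵐ ω ∂P, Metric.ball (ρ ω) (r ω) ⊆ A ω := by
  obtain ⟨r, hr, h⟩ := stmt19_general hAmeas hAconv hρmeas
  exact ⟨r, hr, hρsel.mono fun ω hω => (h ω hω).1, hρsel.mono fun ω hω => (h ω hω).2⟩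

end
end
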